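/- arXiv:1312.6023 — 9 statements merged into one kernel-verified Lean document; each statement's English description precedes it below -/
import Mathlib

section
/- Let A be a unital complex Banach algebra and let S = Σ_{i=1}^n M_{a_i,b_i} be an elementary operator on A. Suppose that S also admits a representation S = Σ_{i=1}^m M_{c_i,d_i}, where each c_i lies in span{a_1,…,a_n} and each d_i lies in span{b_1,…,b_n}. Then Σ_{i=1}^n b_i a_i − Σ_{i=1}^m d_i c_i belongs to rad(A). -/
open scoped ENNReal NNReal

/-- The Jacobson radical of a (possibly noncommutative) ring, as the Jacobson
radical of the zero ideal. -/
noncomputable def jacobsonRadical (A : Type*) [Ring A] : Ideal A :=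
  Ideal.jacobson (⊥ : Ideal A)

/-!
If `∑ₖ uₖ x vₖ = 0` for all `x ∈ A`, then `r = ∑ₖ vₖ uₖ` kills every simple module `X`, so it lies
in the radical. Indeed, the tuples `(vₖ η)ₖ` with `η ∈ X` lie in the submodule `K` of those tuples
`z` in a power of `X` with `∑ₖ uₖ x zₖ = 0` for all `x`. As `X` is simple, that power is semisimple
and has an `A`-linear retraction onto `K`. The matrix `(ρₖⱼ)` of this retraction has entries that
commute with `A`; it fixes `(vₖ η)ₖ`, and its columns satisfy `∑ₖ uₖ ρₖⱼ ξ = 0`. Hence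
`r ξ = ∑ₖ vₖ uₖ ξ = ∑ₖ ∑ⱼ ρₖⱼ vⱼ uₖ ξ = ∑ⱼ vⱼ ∑ₖ uₖ ρₖⱼ ξ = 0`.
For the theorem, `u` is `a` followed by `c`, and `v` is `b` followed by `-d`.
-/

universe u

theorem mem_jacobsonRadical_iff_forall_smul_eq_zero
    {A : Type u} [Ring A] {r : A} :
    r ∈ jacobsonRadical A ↔
      ∀ (X : Type u) [AddCommGroup X] [Module A X] [IsSimpleModule A X] (ξ : X), r • ξ = 0 := by
  rw [jacobsonRadical, Ideal.jacobson_bot]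
  constructor
  · intro hr X _ _ _ ξ
    have hrξ : r • ξ ∈ Module.jacobson A X :=
      Module.le_comap_jacobson (LinearMap.toSpanSingleton A X ξ) hr
    rwa [IsSemisimpleModule.jacobson_eq_bot, Submodule.mem_bot] at hrξ
  · intro hr
    rw [Ring.jacobson_eq_sInf_isMaximal, Submodule.mem_sInf]
    intro L hL
    have : IsSimpleModule A (A ⧸ L) := isSimpleModule_iff_isCoatom.mpr (Ideal.isMaximal_def.mp hL)
    rw [← Submodule.Quotient.mk_eq_zero]
    simpa only [← Submodule.Quotient.mk_smul, smul_eq_mul, mul_one]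
      using hr (A ⧸ L) (Submodule.Quotient.mk 1)

section Module

variable {A X ι : Type*} [Ring A] [AddCommGroup X] [Module A X] [Fintype ι]

variable (X) in
/-- The largest `A`-submodule of `ι → X` on which `z ↦ ∑ k, u k • z k` vanishes. That map is only
additive, so its kernel need not be a submodule; quantifying over `x : A` makes it one. -/
def leftRelations (u : ι → A) : Submodule A (ι → X) where
  carrier := {z | ∀ x : A, ∑ k, u k • x • z k = 0}
  zero_mem' := by simp
  add_mem' hy hz x := by simp [smul_add, Finset.sum_add_distrib, hy x, hz x]
  smul_mem' r z hz x := by simpa [mul_smul] using hz (x * r)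

theorem sum_smul_eq_zero_of_mem_leftRelations {u : ι → A} {z : ι → X}
    (hz : z ∈ leftRelations X u) : ∑ k, u k • z k = 0 := by
  simpa only [one_smul] using hz 1

theorem sum_smul_smul_eq_zero_of_forall_sum_smul_smul_smul [IsSemisimpleModule A X]
    {u v : ι → A} (h : ∀ (x : A) (η : X), ∑ k, u k • x • v k • η = 0) (ξ : X) :
    ∑ k, v k • u k • ξ = 0 := by
  classical
  obtain ⟨ρ, hρ⟩ := IsSemisimpleModule.extension_property (leftRelations X u).subtype
    (leftRelations X u).injective_subtype LinearMap.id
  have ρ_fixes (η : X) (k : ι) : (ρ fun j ↦ v j • η).1 k = v k • η :=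
    congr(($hρ ⟨fun j ↦ v j • η, fun x ↦ h x η⟩).1 k)
  have ρ_column (j : ι) : ∑ k, u k • (ρ (Pi.single j ξ)).1 k = 0 :=
    sum_smul_eq_zero_of_mem_leftRelations (ρ (Pi.single j ξ)).2
  have ρ_expand (a : A) (k : ι) :
      (ρ fun j ↦ v j • a • ξ).1 k = ∑ j, v j • a • (ρ (Pi.single j ξ)).1 k := by
    rw [← Finset.univ_sum_single fun j ↦ v j • a • ξ, map_sum]
    simp only [Pi.single_smul, map_smul, Submodule.coe_sum, Submodule.coe_smul, Finset.sum_apply,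
      Pi.smul_apply]
  calc ∑ k, v k • u k • ξ
      = ∑ k, ∑ j, v j • u k • (ρ (Pi.single j ξ)).1 k :=
        Finset.sum_congr rfl fun k _ ↦ (ρ_fixes (u k • ξ) k).symm.trans (ρ_expand (u k) k)
    _ = ∑ j, v j • ∑ k, u k • (ρ (Pi.single j ξ)).1 k := by
        rw [Finset.sum_comm]
        simp only [Finset.smul_sum]
    _ = 0 := by simp only [ρ_column, smul_zero, Finset.sum_const_zero]

end Module

theorem sum_mul_mem_jacobsonRadical_of_forall_sum_mul_mul
    {A ι : Type*} [Ring A] [Fintype ι] {u v : ι → A} (h : ∀ x, ∑ k, u k * x * v k = 0) :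
    ∑ k, v k * u k ∈ jacobsonRadical A := by
  rw [mem_jacobsonRadical_iff_forall_smul_eq_zero]
  intro X _ _ _ ξ
  have h_smul (x : A) (η : X) : ∑ k, u k • x • v k • η = 0 := by
    simpa only [Finset.sum_smul, mul_smul, zero_smul] using congr($(h x) • η)
  simpa only [Finset.sum_smul, mul_smul] using
    sum_smul_smul_eq_zero_of_forall_sum_smul_smul_smul h_smul ξ

theorem elementary_operator_two_representations_sub_mem_radical_general
    {A ι κ : Type*} [Ring A] [Fintype ι] [Fintype κ] (a b : ι → A) (c d : κ → A)
    (hrep : ∀ x : A, ∑ i, a i * x * b i = ∑ i, c i * x * d i) :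
    (∑ i, b i * a i) - (∑ i, d i * c i) ∈ jacobsonRadical A := by
  have h_zero (x : A) : ∑ k, Sum.elim a c k * x * Sum.elim b (-d) k = 0 := by
    simp [hrep x]
  simpa [← sub_eq_add_neg] using sum_mul_mem_jacobsonRadical_of_forall_sum_mul_mul h_zero

/-- **Lemma 2.1.** Let `A` be a unital complex Banach algebra and let
`S = Σ_{i=1}^n M_{a_i,b_i}` be an elementary operator on `A`.  Suppose that `S`
also admits a representation `S = Σ_{i=1}^m M_{c_i,d_i}` where each `c_i` lies in
`span{a_1,…,a_n}` and each `d_i` lies in `span{b_1,…,b_n}`.  Then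
`Σ_{i=1}^n b_i a_i − Σ_{i=1}^m d_i c_i` belongs to `rad A`. -/
theorem elementary_operator_two_representations_sub_mem_radical
    {A : Type*} [NormedRing A] [NormedAlgebra ℂ A] [CompleteSpace A]
    {n m : ℕ} (a b : Fin n → A) (c d : Fin m → A)
    (hc : ∀ i, c i ∈ Submodule.span ℂ (Set.range a))
    (hd : ∀ i, d i ∈ Submodule.span ℂ (Set.range b))
    (hrep : ∀ x : A, ∑ i, a i * x * b i = ∑ i, c i * x * d i) :
    (∑ i, b i * a i) - (∑ i, d i * c i) ∈ jacobsonRadical A :=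
  elementary_operator_two_representations_sub_mem_radical_general a b c d hrep
end

section
/- Let T : A → B be a spectrally bounded linear operator from a unital SR-algebra A into a unital complex Banach algebra B. Suppose I is a closed two-sided ideal of A and J is a closed two-sided ideal of B with T(I) ⊆ J. Then the induced linear map T̂ : A/I → B/J defined by T̂(x + I) = Tx + J is spectrally bounded, and its spectral norm satisfies ‖T̂‖_σ ≤ ‖T‖_σ. -/
open scoped ENNReal NNReal

/-- The quotient of a complex algebra by (the ring congruence of) a two-sided
ideal is again a complex algebra. -/
noncomputable instance ringConQuotientAlgebra {A : Type*} [Ring A] [Algebra ℂ A]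
    (c : RingCon A) : Algebra ℂ c.Quotient :=
  RingHom.toAlgebra' (c.mk'.comp (algebraMap ℂ A)) (by
    intro r x
    induction x using Quotient.ind with
    | _ y =>
      show c.mk' _ * c.mk' y = c.mk' y * c.mk' _
      rw [← map_mul, ← map_mul, Algebra.commutes])

/-- A map between complex algebras is spectrally bounded if `r(Tx) ≤ M·r(x)`
for some constant `M ≥ 0` and all `x`. -/
def SpectrallyBounded {A B : Type*} [Ring A] [Algebra ℂ A] [Ring B] [Algebra ℂ B]
    (T : A → B) : Prop :=
  ∃ M : ℝ≥0, ∀ x : A, spectralRadius ℂ (T x) ≤ (M : ℝ≥0∞) * spectralRadius ℂ x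

/-- The spectral norm of an operator: the smallest constant `M ≥ 0` such that
`r(Tx) ≤ M·r(x)` for all `x`. -/
noncomputable def spNorm {A B : Type*} [Ring A] [Algebra ℂ A] [Ring B] [Algebra ℂ B]
    (T : A → B) : ℝ≥0 :=
  sInf {M : ℝ≥0 | ∀ x : A, spectralRadius ℂ (T x) ≤ (M : ℝ≥0∞) * spectralRadius ℂ x}

/-- A unital Banach algebra is an SR-algebra if the spectral radius formula
holds in every quotient by a closed (two-sided) ideal:
`r(x + I) = inf {r(x + y) : y ∈ I}`. -/
def IsSRAlgebra (A : Type*) [NormedRing A] [NormedAlgebra ℂ A] [CompleteSpace A] : Prop :=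
  ∀ I : TwoSidedIdeal A, IsClosed (I : Set A) →
    ∀ x : A, spectralRadius ℂ (I.ringCon.mk' x) = ⨅ y ∈ I, spectralRadius ℂ (x + y)

theorem spectralRadius_map_le {𝕜 F A B : Type*} [NormedField 𝕜] [Ring A] [Algebra 𝕜 A]
    [Ring B] [Algebra 𝕜 B] [FunLike F A B] [AlgHomClass F 𝕜 A B] (φ : F) (a : A) :
    spectralRadius 𝕜 (φ a) ≤ spectralRadius 𝕜 a :=
  biSup_mono (AlgHom.spectrum_apply_subset φ a)

theorem spectralRadius_ringCon_mk'_le {A : Type*} [Ring A] [Algebra ℂ A]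
    (c : RingCon A) (a : A) :
    spectralRadius ℂ (c.mk' a) ≤ spectralRadius ℂ a :=
  -- `RingCon.mkₐ` does not apply: its scalar action on the quotient is not
  -- definitionally the one of `ringConQuotientAlgebra`.
  spectralRadius_map_le ({ c.mk' with commutes' := fun _ ↦ rfl } : A →ₐ[ℂ] c.Quotient) a

theorem ringCon_mk'_add_of_mem {R : Type*} [NonAssocRing R] (I : TwoSidedIdeal R) (x : R)
    {y : R} (hy : y ∈ I) :
    I.ringCon.mk' (x + y) = I.ringCon.mk' x :=
  (RingCon.eq I.ringCon).2 <| (I.rel_iff _ _).2 <| by rwa [add_sub_cancel_left]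

section InducedMap

variable {F A B : Type*} [Ring A] [Algebra ℂ A] [Ring B] [Algebra ℂ B]
  [FunLike F A B] [AddMonoidHomClass F A B] {T : F}
  {I : TwoSidedIdeal A} {J : TwoSidedIdeal B}

theorem spectralRadius_mk'_apply_le_mul_iInf (hTI : ∀ x ∈ I, T x ∈ J) {M : ℝ≥0}
    (hM : ∀ x : A, spectralRadius ℂ (T x) ≤ (M : ℝ≥0∞) * spectralRadius ℂ x) (x : A) :
    spectralRadius ℂ (J.ringCon.mk' (T x)) ≤
      (M : ℝ≥0∞) * ⨅ y ∈ I, spectralRadius ℂ (x + y) := by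
  have : Nonempty {y // y ∈ I} := ⟨⟨0, I.zero_mem⟩⟩
  rw [iInf_subtype', ENNReal.mul_iInf fun h ↦ absurd h ENNReal.coe_ne_top]
  refine le_iInf fun ⟨y, hy⟩ ↦ ?_
  calc spectralRadius ℂ (J.ringCon.mk' (T x))
      = spectralRadius ℂ (J.ringCon.mk' (T (x + y))) := by
        rw [map_add T, ringCon_mk'_add_of_mem J _ (hTI y hy)]
    _ ≤ spectralRadius ℂ (T (x + y)) := spectralRadius_ringCon_mk'_le _ _
    _ ≤ M * spectralRadius ℂ (x + y) := hM _

theorem induced_map_on_quotients_spectrally_bounded_general (hT : SpectrallyBounded T)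
    (hSR : ∀ x : A, (⨅ y ∈ I, spectralRadius ℂ (x + y)) ≤ spectralRadius ℂ (I.ringCon.mk' x))
    (hTI : ∀ x ∈ I, T x ∈ J) :
    (∃ M : ℝ≥0, ∀ x : A,
        spectralRadius ℂ (J.ringCon.mk' (T x)) ≤
          (M : ℝ≥0∞) * spectralRadius ℂ (I.ringCon.mk' x)) ∧
      sInf {M : ℝ≥0 | ∀ x : A,
          spectralRadius ℂ (J.ringCon.mk' (T x)) ≤
            (M : ℝ≥0∞) * spectralRadius ℂ (I.ringCon.mk' x)} ≤ spNorm T := by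
  have bound_descends (M : ℝ≥0)
      (hM : ∀ x : A, spectralRadius ℂ (T x) ≤ (M : ℝ≥0∞) * spectralRadius ℂ x) (x : A) :
      spectralRadius ℂ (J.ringCon.mk' (T x)) ≤
        (M : ℝ≥0∞) * spectralRadius ℂ (I.ringCon.mk' x) :=
    (spectralRadius_mk'_apply_le_mul_iInf hTI hM x).trans (mul_le_mul_right (hSR x) _)
  exact ⟨hT.imp bound_descends, csInf_le_csInf (OrderBot.bddBelow _) hT bound_descends⟩

end InducedMap

/-- **Proposition 2.7.** Let `T : A → B` be a spectrally bounded linear operator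
from a unital SR-algebra `A` into a unital complex Banach algebra `B`.  Suppose
`I` is a closed two-sided ideal of `A` and `J` is a closed two-sided ideal of
`B` with `T I ⊆ J`.  Then the induced map `T̂ : A/I → B/J`, `x + I ↦ Tx + J`,
is spectrally bounded with `‖T̂‖_σ ≤ ‖T‖_σ`.  (Since the quotient maps are
surjective, both conclusions are stated via representatives.) -/
theorem induced_map_on_quotients_spectrally_bounded
    {A B : Type*} [NormedRing A] [NormedAlgebra ℂ A] [CompleteSpace A]
    [NormedRing B] [NormedAlgebra ℂ B] [CompleteSpace B]
    (T : A →ₗ[ℂ] B) (hT : SpectrallyBounded T) (hSR : IsSRAlgebra A)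
    (I : TwoSidedIdeal A) (hI : IsClosed (I : Set A))
    (J : TwoSidedIdeal B) (hJ : IsClosed (J : Set B))
    (hTI : ∀ x ∈ I, T x ∈ J) :
    (∃ M : ℝ≥0, ∀ x : A,
        spectralRadius ℂ (J.ringCon.mk' (T x)) ≤
          (M : ℝ≥0∞) * spectralRadius ℂ (I.ringCon.mk' x)) ∧
      sInf {M : ℝ≥0 | ∀ x : A,
          spectralRadius ℂ (J.ringCon.mk' (T x)) ≤
            (M : ℝ≥0∞) * spectralRadius ℂ (I.ringCon.mk' x)} ≤ spNorm T :=
  induced_map_on_quotients_spectrally_bounded_general hT (fun x ↦ (hSR I hI x).ge) hTI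
end

section
/- Let A be a unital C*-algebra and let S = Σ_{i=1}^n M_{a_i,b_i} be an elementary operator on A that is spectrally bounded. Then Σ_{i=1}^n b_i a_i belongs to the centre Z(A) of A. -/
open scoped ENNReal NNReal

/-!
Let `c = ∑ i, b i * a i`. It suffices to show that `c` acts as a scalar on every simple quotient
`E = A ⧸ L`, for then all commutators of `c` lie in the Jacobson radical, which vanishes in a
C*-algebra. By linear algebra, `c` can only fail to be scalar if there are `u : E` and a functional
`f` with `f u = 0` and `f (c • u) ≠ 0`. The finite-rank operator `v ↦ ∑ i, f (b i • v) • a i • u`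
has trace `f (c • u)`, hence an eigenvector `v` with eigenvalue `l ≠ 0`. By Jacobson density some
`x : A` acts as `f(·) u` on `u` and all the `b i • v`, and some `y : A` acts there as `q(·) u` with
`q u = 1`. Conjugating `x` repeatedly by the unit `1 + e • y` multiplies `f(·) u` by a power of
`1 + e`, without changing the spectral radius. The values of the elementary operator on these
conjugates thus have arbitrarily large multiples of `l` as eigenvalues, contradicting
spectral boundedness.
-/

section LinearAlgebra

variable {K E : Type*} [Field K] [AddCommGroup E] [Module K E]

lemma exists_hasEigenvalue_ne_zero_of_trace_ne_zero [FiniteDimensional K E]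
    {T : Module.End K E} (hsplits : T.charpoly.Splits) (hT : LinearMap.trace K E T ≠ 0) :
    ∃ l ≠ 0, T.HasEigenvalue l := by
  contrapose! hT
  rw [Module.End.trace_eq_sum_roots_charpoly_of_splits hsplits]
  refine Multiset.sum_eq_zero fun l hl ↦ ?_
  by_contra hl0
  exact hT l hl0 ((Module.End.hasEigenvalue_iff_isRoot_charpoly T l).2
    (Polynomial.isRoot_of_mem_roots hl))

-- The operators `R : E → K^ι` and `L : K^ι → E` below factor the finite-rank operator as `L ∘ R`;
-- eigenvectors are found for the endomorphism `R ∘ L` of a finite-dimensional space.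
lemma exists_sum_smul_eq_smul_of_sum_ne_zero [IsAlgClosed K] {ι : Type*} [Fintype ι]
    (φ : ι → Module.Dual K E) (p : ι → E) (h : ∑ i, φ i (p i) ≠ 0) :
    ∃ l : K, l ≠ 0 ∧ ∃ v : E, v ≠ 0 ∧ ∑ i, φ i v • p i = l • v := by
  classical
  let R : E →ₗ[K] ι → K := LinearMap.pi φ
  let L : (ι → K) →ₗ[K] E := Fintype.linearCombination K p
  have htrace : LinearMap.trace K (ι → K) (R ∘ₗ L) = ∑ i, φ i (p i) := by
    simp [LinearMap.trace_eq_matrix_trace K (Pi.basisFun K ι), Matrix.trace, R, L]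
  obtain ⟨l, hl, hev⟩ :=
    exists_hasEigenvalue_ne_zero_of_trace_ne_zero (IsAlgClosed.splits _) (htrace ▸ h)
  obtain ⟨s, hs⟩ := hev.exists_hasEigenvector
  have hRL : R (L s) = l • s := hs.apply_eq_smul
  refine ⟨l, hl, L s, fun hLs ↦ smul_ne_zero hl hs.2 (by rw [← hRL, hLs, map_zero]), ?_⟩
  calc ∑ i, φ i (L s) • p i = L (R (L s)) := (Fintype.linearCombination_apply K p (R (L s))).symm
    _ = l • L s := by rw [hRL, map_smul]

lemma exists_eq_smul_id_of_forall_dual (T : E →ₗ[K] E)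
    (hT : ∀ (u : E) (f : Module.Dual K E), f u = 0 → f (T u) = 0) :
    ∃ t : K, T = t • LinearMap.id := by
  refine LinearMap.exists_eq_smul_id_of_forall_notLinearIndependent fun u hu ↦ ?_
  have hTu : T u ∉ Submodule.span K {u} := by
    rw [Submodule.mem_span_singleton, not_exists]
    exact (LinearIndependent.pair_iff' (hu.ne_zero 0)).1 hu
  obtain ⟨f, hf, hfu⟩ := Submodule.exists_le_ker_of_notMem hTu
  exact hf (hT u f (hfu (Submodule.mem_span_singleton_self u)))

end LinearAlgebra

section Action

lemma pow_smul_eq_pow_smul {M K E : Type*} [Monoid M] [Monoid K] [MulAction M E] [MulAction K E]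
    [SMulCommClass M K E] {g : M} {u : E} {μ : K} (hu : g • u = μ • u) (k : ℕ) :
    g ^ k • u = μ ^ k • u := by
  induction k with
  | zero => simp
  | succ k ih => rw [pow_succ', mul_smul, ih, smul_comm, hu, smul_smul, pow_succ]

lemma pow_smul_sub_mem_span_singleton {M K E : Type*} [Monoid M] [Ring K] [AddCommGroup E]
    [Module K E] [DistribMulAction M E] [SMulCommClass M K E] {g : M} {u w : E} {μ : K}
    (hu : g • u = μ • u) (hw : g • w - w ∈ K ∙ u) (k : ℕ) : g ^ k • w - w ∈ K ∙ u := by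
  obtain ⟨t, ht⟩ := Submodule.mem_span_singleton.1 hw
  induction k with
  | zero => simp
  | succ k ih =>
    have hsplit : g ^ (k + 1) • w - w = (t * μ ^ k) • u + (g ^ k • w - w) := by
      rw [pow_succ, mul_smul, ← sub_add_cancel (g • w) w, ← ht, smul_add, smul_comm,
        pow_smul_eq_pow_smul hu, smul_smul, add_sub_assoc]
    rw [hsplit]
    exact add_mem (Submodule.smul_mem _ _ (Submodule.mem_span_singleton_self u)) ih

variable {K A E : Type*} [CommRing K] [Ring A] [Algebra K A] [AddCommGroup E] [Module K E]
  [Module A E] [IsScalarTower K A E]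

lemma mem_spectrum_of_smul_eq_smul {y : A} {l : K} {v : E} (hv : v ≠ 0) (h : y • v = l • v) :
    l ∈ spectrum K y := by
  rw [spectrum.mem_iff]
  intro hu
  exact hv (hu.smul_eq_zero.1 (by rw [sub_smul, algebraMap_smul, h, sub_self]))

lemma exists_forall_smul_eq_of_surjective_algebraMap_end [IsSemisimpleModule A E]
    (hE : Function.Surjective (algebraMap K (Module.End A E))) (F : E →ₗ[K] E) (s : Finset E) :
    ∃ r : A, ∀ w ∈ s, r • w = F w := by
  let G : Module.End (Module.End A E) E :=
    { toFun := F
      map_add' := F.map_add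
      map_smul' := fun φ w ↦ by
        obtain ⟨l, rfl⟩ := hE φ
        simp }
  obtain ⟨r, hr⟩ := jacobson_density (R := A) G s
  exact ⟨r, fun w hw ↦ (hr w hw).symm⟩

lemma units_conj_smul_eq {g : Aˣ} {x : A} {u w : E} {μ r : K} (hμ : IsUnit μ) (hu : g • u = μ • u)
    (hw : g • w - w ∈ K ∙ u) (hxu : x • u = 0) (hxw : x • w = r • u) :
    (↑g * x * ↑g⁻¹ : A) • w = (μ * r) • u := by
  obtain ⟨t, ht⟩ := Submodule.mem_span_singleton.1 hw
  obtain ⟨ν, hν⟩ := hμ.exists_left_inv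
  have hinv : g⁻¹ • w = w - (t * ν) • u := by
    rw [inv_smul_eq_iff, smul_sub, smul_comm g, hu, smul_smul, mul_assoc, hν, mul_one, ht,
      sub_sub_cancel]
  rw [mul_smul, mul_smul, ← Units.smul_def, ← Units.smul_def, hinv, smul_sub, smul_comm x, hxu,
    smul_zero, sub_zero, hxw, smul_comm, hu, smul_smul, mul_comm]

lemma mul_mem_spectrum_sum_mul_mul {ι : Type*} [Fintype ι] {a b : ι → A} {z : A} {u v : E}
    {r : ι → K} {μ l : K} (hv : v ≠ 0) (hlv : ∑ i, r i • a i • u = l • v)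
    (hz : ∀ i, z • b i • v = (μ * r i) • u) : μ * l ∈ spectrum K (∑ i, a i * z * b i) := by
  refine mem_spectrum_of_smul_eq_smul hv ?_
  calc (∑ i, a i * z * b i) • v = ∑ i, a i • z • b i • v := by simp [Finset.sum_smul, mul_smul]
    _ = ∑ i, μ • r i • a i • u :=
      Finset.sum_congr rfl fun i _ ↦ by rw [hz, smul_comm, mul_smul]
    _ = μ • l • v := by rw [← Finset.smul_sum, hlv]
    _ = (μ * l) • v := smul_smul μ l v

end Action

section Spectrum

lemma spectralRadius_eq_of_isConj {𝕜 A : Type*} [NormedField 𝕜] [Ring A] [Algebra 𝕜 A] {x z : A}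
    (h : IsConj x z) : spectralRadius 𝕜 x = spectralRadius 𝕜 z := by
  obtain ⟨g, hg⟩ := h
  rw [(Units.eq_mul_inv_iff_mul_eq g).2 hg.eq.symm]
  simp only [spectralRadius, spectrum.units_conjugate]

lemma spectralRadius_lt_top {𝕜 A : Type*} [NormedField 𝕜] [NormedRing A] [NormedAlgebra 𝕜 A]
    [CompleteSpace A] (x : A) : spectralRadius 𝕜 x < ⊤ :=
  (spectrum.spectralRadius_le_pow_nnnorm_pow_one_div 𝕜 x 0).trans_lt
    (by simp [ENNReal.mul_lt_top])

lemma exists_isUnit_one_add_smul {𝕜 A : Type*} [RCLike 𝕜] [NormedRing A] [NormedAlgebra 𝕜 A]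
    [CompleteSpace A] (y : A) : ∃ e : 𝕜, 1 < ‖1 + e‖ ∧ IsUnit (1 + e • y) := by
  have hpos : 0 < (‖y‖ + 1)⁻¹ := by positivity
  refine ⟨((‖y‖ + 1)⁻¹ : ℝ), ?_, ?_⟩
  · rw [← RCLike.ofReal_one (K := 𝕜), ← RCLike.ofReal_add, RCLike.norm_ofReal]
    exact (lt_add_of_pos_right 1 hpos).trans_le (le_abs_self _)
  · rw [← sub_neg_eq_add]
    refine isUnit_one_sub_of_norm_lt_one ?_
    rw [norm_neg, norm_smul, RCLike.norm_ofReal, abs_of_pos hpos,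
      inv_mul_lt_one₀ (by positivity)]
    exact lt_add_one _

end Spectrum

section ElementaryOperator

variable {A E : Type*} [NormedRing A] [NormedAlgebra ℂ A] [CompleteSpace A]
  [AddCommGroup E] [Module ℂ E] [Module A E] [IsScalarTower ℂ A E] [IsSemisimpleModule A E]

lemma exists_forall_exists_isConj_smul_eq
    (hE : Function.Surjective (algebraMap ℂ (Module.End A E)))
    {u : E} (hu : u ≠ 0) {f : Module.Dual ℂ E} (hfu : f u = 0) (s : Finset E) :
    ∃ x : A, ∀ C : ℝ, ∃ z : A, IsConj x z ∧
      ∃ μ : ℂ, C < ‖μ‖ ∧ ∀ w ∈ s, z • w = (μ * f w) • u := by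
  classical
  obtain ⟨q, hq⟩ := Module.Projective.exists_dual_eq_one ℂ hu
  obtain ⟨x, hx⟩ :=
    exists_forall_smul_eq_of_surjective_algebraMap_end hE (f.smulRight u) (insert u s)
  obtain ⟨y, hy⟩ :=
    exists_forall_smul_eq_of_surjective_algebraMap_end hE (q.smulRight u) (insert u s)
  simp only [Finset.forall_mem_insert, LinearMap.smulRight_apply, hfu, hq, zero_smul,
    one_smul] at hx hy
  obtain ⟨e, he, g, hg⟩ := exists_isUnit_one_add_smul (𝕜 := ℂ) y
  have hgu : g • u = (1 + e) • u := by
    rw [Units.smul_def, hg, add_smul, one_smul, smul_assoc, hy.1, add_smul, one_smul]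
  have hgs (w) (hw : w ∈ s) : g • w - w ∈ ℂ ∙ u := by
    rw [Units.smul_def, hg, add_smul, one_smul, smul_assoc, hy.2 w hw, smul_smul,
      add_sub_cancel_left]
    exact Submodule.smul_mem _ _ (Submodule.mem_span_singleton_self u)
  have he0 : 1 + e ≠ 0 := norm_pos_iff.1 (one_pos.trans he)
  refine ⟨x, fun C ↦ ?_⟩
  obtain ⟨k, hk⟩ := pow_unbounded_of_one_lt C he
  refine ⟨↑(g ^ k) * x * ↑(g ^ k)⁻¹, ⟨g ^ k, Units.mk_semiconjBy _ x⟩, (1 + e) ^ k,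
    by rwa [norm_pow], fun w hw ↦ ?_⟩
  exact units_conj_smul_eq (pow_ne_zero k he0).isUnit (pow_smul_eq_pow_smul hgu k)
    (pow_smul_sub_mem_span_singleton hgu (hgs w hw) k) hx.1 (hx.2 w hw)

variable {ι : Type*} [Fintype ι] {a b : ι → A}

lemma SpectrallyBounded.dual_apply_eq_zero (hS : SpectrallyBounded fun x : A ↦ ∑ i, a i * x * b i)
    (hE : Function.Surjective (algebraMap ℂ (Module.End A E))) {u : E} {f : Module.Dual ℂ E}
    (hfu : f u = 0) : f ((∑ i, b i * a i) • u) = 0 := by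
  classical
  by_contra hf
  have hu : u ≠ 0 := by rintro rfl; simp at hf
  obtain ⟨l, hl, v, hv, hlv⟩ := exists_sum_smul_eq_smul_of_sum_ne_zero
    (fun i ↦ f ∘ₗ Algebra.lsmul ℂ ℂ E (b i)) (fun i ↦ a i • u)
    (by simpa [Finset.sum_smul, mul_smul] using hf)
  obtain ⟨x, hx⟩ := exists_forall_exists_isConj_smul_eq hE hu hfu
    (Finset.univ.image fun i ↦ b i • v)
  obtain ⟨M, hM⟩ := hS
  have htop : M * spectralRadius ℂ x ≠ ⊤ :=
    ENNReal.mul_ne_top ENNReal.coe_ne_top (spectralRadius_lt_top x).ne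
  obtain ⟨z, hxz, μ, hμ, hz⟩ := hx ((M * spectralRadius ℂ x).toReal / ‖l‖)
  have hmem : μ * l ∈ spectrum ℂ (∑ i, a i * z * b i) :=
    mul_mem_spectrum_sum_mul_mul hv hlv fun i ↦ hz _ (Finset.mem_image_of_mem _ (Finset.mem_univ i))
  have hle : (‖μ * l‖₊ : ℝ≥0∞) ≤ M * spectralRadius ℂ x :=
    calc (‖μ * l‖₊ : ℝ≥0∞) ≤ spectralRadius ℂ (∑ i, a i * z * b i) :=
          le_iSup₂ (f := fun c (_ : c ∈ spectrum ℂ (∑ i, a i * z * b i)) ↦ (‖c‖₊ : ℝ≥0∞)) _ hmem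
      _ ≤ M * spectralRadius ℂ z := hM z
      _ = M * spectralRadius ℂ x := by rw [spectralRadius_eq_of_isConj hxz]
  rw [div_lt_iff₀ (norm_pos_iff.2 hl), ← norm_mul] at hμ
  exact hμ.not_ge (ENNReal.toReal_mono htop hle)

lemma SpectrallyBounded.exists_forall_smul_eq
    (hS : SpectrallyBounded fun x : A ↦ ∑ i, a i * x * b i)
    (hE : Function.Surjective (algebraMap ℂ (Module.End A E))) :
    ∃ t : ℂ, ∀ v : E, (∑ i, b i * a i) • v = t • v := by
  obtain ⟨t, ht⟩ := exists_eq_smul_id_of_forall_dual (Algebra.lsmul ℂ ℂ E (∑ i, b i * a i))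
    fun _ _ hfu ↦ hS.dual_apply_eq_zero hE hfu
  exact ⟨t, LinearMap.congr_fun ht⟩

end ElementaryOperator

section Schur

lemma continuous_linearMap_quotient {A N : Type*} [Ring A] [TopologicalSpace A] (L : Ideal A)
    [AddCommGroup N] [TopologicalSpace N] [Module A N] [ContinuousSMul A N] (φ : (A ⧸ L) →ₗ[A] N) :
    Continuous φ := by
  have hφ (r : A) : φ (L.mkQ r) = r • φ (L.mkQ 1) := by
    rw [← map_smul, ← map_smul, smul_eq_mul, mul_one]
  rw [L.isQuotientMap_mkQ.continuous_iff]
  exact (continuous_id.smul continuous_const).congr fun r ↦ (hφ r).symm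

theorem surjective_algebraMap_end_quotient {A : Type*} [NormedRing A] [NormedAlgebra ℂ A]
    [CompleteSpace A] (L : Ideal A) [L.IsMaximal] :
    Function.Surjective (algebraMap ℂ (Module.End A (A ⧸ L))) := by
  intro φ
  have : IsClosed (L : Set A) := Ideal.IsMaximal.isClosed
  have : IsSimpleModule A (A ⧸ L) := isSimpleModule_iff_isCoatom.2 (Ideal.isMaximal_def.1 ‹_›)
  have : Nontrivial (A ⧸ L) := IsSimpleModule.nontrivial A _
  let T : (A ⧸ L) →L[ℂ] (A ⧸ L) := ⟨φ.restrictScalars ℂ, continuous_linearMap_quotient L φ⟩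
  obtain ⟨l, hl⟩ := spectrum.nonempty T
  have hbij : ¬ Function.Bijective (algebraMap ℂ (Module.End A (A ⧸ L)) l - φ) :=
    fun h ↦ hl (ContinuousLinearMap.isUnit_iff_bijective.2 h)
  exact ⟨l, sub_eq_zero.1 ((LinearMap.bijective_or_eq_zero _).resolve_left hbij)⟩

end Schur

section Jacobson

lemma isUnit_one_add_of_mem_jacobson {R : Type*} [Ring R] {x : R} (hx : x ∈ Ring.jacobson R) :
    IsUnit (1 + x) := by
  have exists_left_inv {y : R} (hy : y ∈ Ring.jacobson R) : ∃ z, z * (1 + y) = 1 := by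
    obtain ⟨z, hz⟩ := Ideal.mem_jacobson_iff.1 (Ideal.jacobson_bot (R := R) ▸ hy) 1
    refine ⟨z, ?_⟩
    rw [Ideal.mem_bot, mul_one, sub_eq_zero] at hz
    rw [mul_add, mul_one, add_comm, hz]
  obtain ⟨z, hz⟩ := exists_left_inv hx
  have hz' : 1 + -(z * x) = z := by rw [← hz]; noncomm_ring
  obtain ⟨t, ht⟩ := exists_left_inv (neg_mem (Ideal.mul_mem_left _ z hx))
  rw [hz'] at ht
  exact ⟨⟨1 + x, z, left_inv_eq_right_inv ht hz ▸ ht, hz⟩, rfl⟩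

lemma spectralRadius_eq_zero_of_mem_jacobson {𝕜 A : Type*} [NormedField 𝕜] [Ring A] [Algebra 𝕜 A]
    {x : A} (hx : x ∈ Ring.jacobson A) : spectralRadius 𝕜 x = 0 := by
  refine le_antisymm (iSup₂_le fun l hl ↦ ?_) bot_le
  rcases eq_or_ne l 0 with rfl | hl0
  · simp
  refine absurd ?_ (spectrum.mem_iff.1 hl)
  have hmem : -(algebraMap 𝕜 A l⁻¹ * x) ∈ Ring.jacobson A := neg_mem (Ideal.mul_mem_left _ _ hx)
  have hfactor : algebraMap 𝕜 A l - x = algebraMap 𝕜 A l * (1 + -(algebraMap 𝕜 A l⁻¹ * x)) := by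
    rw [mul_add, mul_one, mul_neg, ← mul_assoc, ← map_mul, mul_inv_cancel₀ hl0, map_one, one_mul,
      sub_eq_add_neg]
  rw [hfactor]
  exact ((IsUnit.mk0 l hl0).map (algebraMap 𝕜 A)).mul (isUnit_one_add_of_mem_jacobson hmem)

theorem jacobson_eq_bot_of_cstarAlgebra {A : Type*} [CStarAlgebra A] : Ring.jacobson A = ⊥ := by
  refine (Submodule.eq_bot_iff _).2 fun x hx ↦ norm_eq_zero.1 (pow_eq_zero_iff two_ne_zero |>.1 ?_)
  rw [← CStarAlgebra.toReal_spectralRadius_star_mul_self_eq_norm_sq,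
    spectralRadius_eq_zero_of_mem_jacobson (Ideal.mul_mem_left _ _ hx), ENNReal.toReal_zero]

end Jacobson

lemma mul_sub_mul_mem_of_forall_smul_eq {K A : Type*} [CommSemiring K] [Ring A] [Algebra K A]
    {L : Ideal A} {c : A} {t : K} (hc : ∀ v : A ⧸ L, c • v = t • v) (x : A) :
    x * c - c * x ∈ L := by
  have h : (x * c - c * x) • (Submodule.Quotient.mk 1 : A ⧸ L) = 0 := by
    rw [sub_smul, mul_smul, mul_smul, hc, hc, smul_comm, sub_self]
  rwa [← Submodule.Quotient.mk_smul, smul_eq_mul, mul_one, Submodule.Quotient.mk_eq_zero] at h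

theorem spectrally_bounded_elementary_operator_cstar_sum_mem_center_general
    {A : Type*} [NormedRing A] [NormedAlgebra ℂ A] [CompleteSpace A] {ι : Type*} [Fintype ι]
    (a b : ι → A) (hS : SpectrallyBounded (fun x : A => ∑ i, a i * x * b i)) :
    Ideal.Quotient.mk (Ring.jacobson A) (∑ i, b i * a i) ∈ Set.center (A ⧸ Ring.jacobson A) := by
  rw [Semigroup.mem_center_iff, Ideal.Quotient.mk_surjective.forall]
  intro x
  rw [← map_mul, ← map_mul, Ideal.Quotient.eq, Ring.jacobson_eq_sInf_isMaximal, Submodule.mem_sInf]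
  intro L (hL : Ideal.IsMaximal L)
  have : IsSimpleModule A (A ⧸ L) := isSimpleModule_iff_isCoatom.2 hL.out
  obtain ⟨t, ht⟩ := hS.exists_forall_smul_eq (surjective_algebraMap_end_quotient L)
  exact mul_sub_mul_mem_of_forall_smul_eq ht x

/-- **Corollary 2.3.** Let `A` be a unital C*-algebra and let
`S = Σ_{i=1}^n M_{a_i,b_i}` be an elementary operator on `A` that is spectrally
bounded.  Then `Σ_{i=1}^n b_i a_i` belongs to the centre `Z(A)` of `A`. -/
theorem spectrally_bounded_elementary_operator_cstar_sum_mem_center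
    {A : Type*} [NormedRing A] [StarRing A] [CStarRing A] [NormedAlgebra ℂ A]
    [StarModule ℂ A] [CompleteSpace A]
    {n : ℕ} (a b : Fin n → A)
    (hS : SpectrallyBounded (fun x : A => ∑ i, a i * x * b i)) :
    (∑ i, b i * a i) ∈ Set.center A := by
  let : CStarAlgebra A := {}
  refine Semigroup.mem_center_iff.2 fun x ↦ sub_eq_zero.1 ?_
  rw [← Submodule.mem_bot A, ← jacobson_eq_bot_of_cstarAlgebra, ← Ideal.Quotient.eq, map_mul,
    map_mul]
  exact Semigroup.mem_center_iff.1
    (spectrally_bounded_elementary_operator_cstar_sum_mem_center_general a b hS) _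
end

section
/- Let A be a unital complex Banach algebra, let u, v ∈ A and set e = vu. The two-sided multiplication M_{u,v} is a homomorphism modulo rad(A) (i.e., u x y v − (u x v)(u y v) ∈ rad(A) for all x, y ∈ A) if and only if e is an idempotent belonging to 𝒵(A) and u(1−e)xv ∈ rad(A) for every x ∈ A. -/
open scoped ENNReal NNReal

/-- The centre modulo the radical: the inverse image of the centre of `A/rad A`
under the canonical quotient map. -/
def centerModRadical (A : Type*) [Ring A] : Set A :=
  {a : A | ∀ b : A, a * b - b * a ∈ jacobsonRadical A}

/-!
For `e = v * u`, multiplicativity of `x ↦ u * x * v` says that `u * x * (1 - e) * y * v = 0` for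
all `x` and `y`. Multiplying by suitable elements on both sides turns this into `c * y * c = 0` for
each `c` in the Peirce corners `e * R * (1 - e)` and `(1 - e) * R * e`. In a semiprime ring such as
`A ⧸ rad A` both corners therefore vanish, which means that `e` is a central idempotent.
-/

/-- A ring is semiprime if no nonzero `a` satisfies `a * R * a = 0`; equivalently, it has no nonzero
nilpotent two-sided ideal. It is the property of `A ⧸ rad A` that the argument uses; the
elementwise form avoids products of two-sided ideals. -/
class IsSemiprimeRing (R : Type*) [Ring R] : Prop where
  eq_zero_of_forall_mul_mul_self {a : R} (h : ∀ x, a * x * a = 0) : a = 0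

section Ring

variable {R : Type*} [Ring R]

theorem isSemiprimeRing_of_jacobson_eq_bot (hR : Ring.jacobson R = ⊥) : IsSemiprimeRing R where
  eq_zero_of_forall_mul_mul_self {a} h := by
    rw [← Ideal.mem_bot, ← hR, ← Ideal.jacobson_bot, Ideal.mem_jacobson_iff]
    -- As `(y * a) ^ 2 = 0`, the inverse of `1 + y * a` is `1 - y * a`.
    refine fun y ↦ ⟨1 - y * a, Ideal.mem_bot.mpr ?_⟩
    calc (1 - y * a) * y * a + (1 - y * a) - 1 = -(y * (a * y * a)) := by noncomm_ring
      _ = 0 := by rw [h, mul_zero, neg_zero]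

instance isSemiprimeRing_quotient_jacobson : IsSemiprimeRing (R ⧸ Ring.jacobson R) :=
  isSemiprimeRing_of_jacobson_eq_bot (Ring.jacobson_quotient_jacobson R)

theorem mul_mul_eq_mul_mul_mul_iff (u v x y : R) :
    u * x * y * v = u * x * v * (u * y * v) ↔ u * x * (1 - v * u) * y * v = 0 := by
  rw [← sub_eq_zero]
  congr! 1
  noncomm_ring

theorem commute_of_peirce_corners_eq_zero {e x : R} (h₁ : e * x * (1 - e) = 0)
    (h₂ : (1 - e) * x * e = 0) : Commute e x :=
  calc e * x = e * x * e := by rwa [mul_one_sub, sub_eq_zero] at h₁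
    _ = x * e := by rwa [one_sub_mul, sub_mul, sub_eq_zero, eq_comm] at h₂

section Semiprime

variable [IsSemiprimeRing R] {u v : R}

theorem mul_mul_one_sub_eq_zero_of_forall (h : ∀ x y, u * x * (1 - v * u) * y * v = 0) (x : R) :
    v * u * x * (1 - v * u) = 0 := by
  refine IsSemiprimeRing.eq_zero_of_forall_mul_mul_self fun y ↦ ?_
  calc v * u * x * (1 - v * u) * y * (v * u * x * (1 - v * u))
      = v * (u * x * (1 - v * u) * y * v) * (u * x * (1 - v * u)) := by simp only [mul_assoc]
    _ = 0 := by rw [h, mul_zero, zero_mul]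

theorem one_sub_mul_mul_eq_zero_of_forall (h : ∀ x y, u * x * (1 - v * u) * y * v = 0) (x : R) :
    (1 - v * u) * x * (v * u) = 0 := by
  refine IsSemiprimeRing.eq_zero_of_forall_mul_mul_self fun y ↦ ?_
  calc (1 - v * u) * x * (v * u) * y * ((1 - v * u) * x * (v * u))
      = (1 - v * u) * x * v * (u * y * (1 - v * u) * x * v) * u := by simp only [mul_assoc]
    _ = 0 := by rw [h, mul_zero, zero_mul]

theorem two_sided_multiplication_homomorphism_iff (u v : R) :
    (∀ x y, u * x * y * v = u * x * v * (u * y * v)) ↔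
      IsIdempotentElem (v * u) ∧ (∀ x, Commute (v * u) x) ∧
        ∀ x, u * (1 - v * u) * x * v = 0 := by
  simp only [mul_mul_eq_mul_mul_mul_iff]
  constructor
  · intro h
    have h₁ := mul_mul_one_sub_eq_zero_of_forall h
    have h₂ := one_sub_mul_mul_eq_zero_of_forall h
    exact ⟨isIdempotentElem_iff_mul_one_sub_self.mpr (by simpa only [mul_one] using h₁ 1),
      fun x ↦ commute_of_peirce_corners_eq_zero (h₁ x) (h₂ x),
      fun x ↦ by simpa only [mul_one] using h 1 x⟩
  · rintro ⟨-, hcentral, h⟩ x y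
    have hcomm : Commute x (1 - v * u) := (Commute.one_right x).sub_right (hcentral x).symm
    calc u * x * (1 - v * u) * y * v = u * (1 - v * u) * (x * y) * v := by
          rw [mul_assoc u x, hcomm.eq]
          simp only [mul_assoc]
      _ = 0 := h (x * y)

end Semiprime

theorem two_sided_multiplication_homomorphism_mod_radical_iff_general
    (I : Ideal R) [I.IsTwoSided] [IsSemiprimeRing (R ⧸ I)] (u v e : R) (he : e = v * u) :
    (∀ x y : R, u * x * y * v - (u * x * v) * (u * y * v) ∈ I) ↔
      (e * e - e ∈ I ∧ (∀ b : R, e * b - b * e ∈ I) ∧ ∀ x : R, u * (1 - e) * x * v ∈ I) := by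
  subst he
  have h := two_sided_multiplication_homomorphism_iff
    (Ideal.Quotient.mk I u) (Ideal.Quotient.mk I v)
  simp only [IsIdempotentElem, Commute, SemiconjBy, Ideal.Quotient.mk_surjective.forall] at h
  simpa only [← Ideal.Quotient.eq_zero_iff_mem, map_sub, map_mul, map_one, sub_eq_zero] using h

end Ring

/-- **Proposition 2.2.** Let `A` be a unital complex Banach algebra, let
`u, v ∈ A` and set `e = vu`.  The two-sided multiplication `M_{u,v}` is a
homomorphism modulo `rad A` (i.e. `u x y v − (u x v)(u y v) ∈ rad A` for all
`x, y ∈ A`) if and only if `e` is an idempotent belonging to `𝒵(A)` and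
`u(1−e)xv ∈ rad A` for every `x ∈ A`. -/
theorem two_sided_multiplication_homomorphism_mod_radical_iff
    {A : Type*} [NormedRing A] [NormedAlgebra ℂ A] [CompleteSpace A]
    (u v : A) (e : A) (he : e = v * u) :
    (∀ x y : A, u * x * y * v - (u * x * v) * (u * y * v) ∈ jacobsonRadical A) ↔
      (e * e - e ∈ jacobsonRadical A ∧ e ∈ centerModRadical A ∧
        ∀ x : A, u * (1 - e) * x * v ∈ jacobsonRadical A) := by
  simp only [centerModRadical, Set.mem_ofPred_eq, jacobsonRadical, Ideal.jacobson_bot]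
  exact two_sided_multiplication_homomorphism_mod_radical_iff_general (Ring.jacobson A) u v e he
end

section
/- Let A be a unital complex Banach algebra and let T_1, …, T_n : A → A be linear maps such that, for each i, either T_i is an algebra homomorphism or (T_i x)² ∈ rad(A) for every x ∈ A. Suppose moreover that (T_i y)(T_j x) ∈ rad(A) for all x, y ∈ A whenever i > j. Then, for all λ_1, …, λ_n ∈ ℂ, the linear map T = Σ_{i=1}^n λ_i T_i is spectrally bounded. -/
open scoped ENNReal NNReal

/-!
The spectral radius only depends on the nonzero part of the spectrum, that is, on which multiples
of an element are quasiregular (`1 + a` is invertible). If `a * b` lies in the radical, then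
`(1 + a) * (1 + b)` differs from `1 + (a + b)` by a radical element, so `a + b` is quasiregular
whenever `a` and `b` are; hence the nonzero spectrum of `a + b` is contained in the union of those
of `a` and `b`. Adding the `λᵢ Tᵢ x` one at a time, in increasing order of `i`, gives
`r (T x) ≤ max |λᵢ| r (Tᵢ x)`. Finally `r (Tᵢ x) ≤ r x`: multiplicative maps preserve
quasiregularity, and `a ^ 2 ∈ rad A` forces `r a = 0` because `1 - a ^ 2 = (1 + a) * (1 - a)`
is invertible.
-/

section Quasiregular

variable {R : Type*} [Ring R] {a b : R}

theorem isUnit_add_one_of_mem_jacobsonRadical (ha : a ∈ jacobsonRadical R) : IsUnit (a + 1) := by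
  have exists_left_inv (x : R) (hx : x ∈ jacobsonRadical R) : ∃ z, z * (x + 1) = 1 := by
    obtain ⟨z, hz⟩ := Ideal.exists_mul_add_sub_mem_of_mem_jacobson x hx
    exact ⟨z, sub_eq_zero.mp hz⟩
  obtain ⟨z, hz⟩ := exists_left_inv a ha
  -- The left inverse `z` has the same shape as `a + 1`, so it is left invertible as well.
  have hz' : -(z * a) + 1 = z := by rw [← hz]; noncomm_ring
  obtain ⟨w, hw⟩ := exists_left_inv (-(z * a)) (neg_mem (Ideal.mul_mem_left _ z ha))
  rw [hz'] at hw
  obtain rfl : w = a + 1 := left_inv_eq_right_inv hw hz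
  exact ⟨⟨a + 1, z, hw, hz⟩, rfl⟩

theorem isQuasiregular_of_sq_mem_jacobsonRadical (ha : a ^ 2 ∈ jacobsonRadical R) :
    IsQuasiregular a := by
  have hcomm : Commute (1 + a) (1 - a) :=
    (Commute.one_left _).add_left ((Commute.one_right a).sub_right (Commute.refl a))
  have hunit : IsUnit ((1 + a) * (1 - a)) := by
    convert isUnit_add_one_of_mem_jacobsonRadical (neg_mem ha) using 1
    noncomm_ring
  exact isQuasiregular_iff_isUnit.mpr (hcomm.isUnit_mul_iff.mp hunit).1

theorem isQuasiregular_add_of_mul_mem_jacobsonRadical (hab : a * b ∈ jacobsonRadical R)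
    (ha : IsQuasiregular a) (hb : IsQuasiregular b) : IsQuasiregular (a + b) := by
  obtain ⟨u, hu⟩ := ha.isUnit_one_add.mul hb.isUnit_one_add
  have hfactor : 1 + (a + b) = u * (-(↑u⁻¹ * (a * b)) + 1) := by
    rw [mul_add, mul_neg, Units.mul_inv_cancel_left, mul_one, hu]
    noncomm_ring
  rw [isQuasiregular_iff_isUnit, hfactor]
  exact u.isUnit.mul
    (isUnit_add_one_of_mem_jacobsonRadical (neg_mem (Ideal.mul_mem_left _ _ hab)))

end Quasiregular

section Quasispectrum

variable {R A : Type*} [CommRing R] [Ring A] [Algebra R A]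

theorem quasispectrum_eq_nonunits_of_sq_mem_jacobsonRadical {a : A}
    (ha : a ^ 2 ∈ jacobsonRadical A) : quasispectrum R a = nonunits R := by
  refine Set.Subset.antisymm (fun r hr hunit => hr hunit ?_)
    fun r hr => quasispectrum.not_isUnit_mem a hr
  apply isQuasiregular_of_sq_mem_jacobsonRadical
  rw [neg_sq, smul_pow]
  exact Submodule.smul_of_tower_mem _ _ ha

theorem quasispectrum_add_subset_of_mul_mem_jacobsonRadical {a b : A}
    (hab : a * b ∈ jacobsonRadical A) :
    quasispectrum R (a + b) ⊆ quasispectrum R a ∪ quasispectrum R b := by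
  intro r hr
  by_contra! hnot
  simp only [Set.mem_union, not_or, quasispectrum, Set.mem_ofPred_eq, not_forall, not_not] at hnot
  obtain ⟨⟨hunit, ha⟩, _, hb⟩ := hnot
  refine hr hunit ?_
  rw [smul_add, neg_add]
  refine isQuasiregular_add_of_mul_mem_jacobsonRadical ?_ ha hb
  rw [neg_mul_neg, smul_mul_smul_comm]
  exact Submodule.smul_of_tower_mem _ _ hab

theorem quasispectrum_apply_subset_of_map_mul_or_sq_mem_jacobsonRadical {B : Type*}
    [NonUnitalRing B] [Module R B] (f : B →ₗ[R] A)
    (hf : (∀ x y, f (x * y) = f x * f y) ∨ ∀ x, f x ^ 2 ∈ jacobsonRadical A) (x : B) :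
    quasispectrum R (f x) ⊆ quasispectrum R x := by
  rcases hf with hmul | hsq
  · let φ : B →ₙₐ[R] A := { f with map_zero' := f.map_zero, map_mul' := hmul }
    exact NonUnitalAlgHom.quasispectrum_apply_subset φ x
  · rw [quasispectrum_eq_nonunits_of_sq_mem_jacobsonRadical (hsq x)]
    exact fun r hr => quasispectrum.not_isUnit_mem x hr

end Quasispectrum

section SpectralRadius

variable {𝕜 A : Type*} [NormedField 𝕜] [Ring A] [Algebra 𝕜 A]

theorem spectralRadius_eq_iSup_quasispectrum (a : A) :
    spectralRadius 𝕜 a = ⨆ k ∈ quasispectrum 𝕜 a, (‖k‖₊ : ℝ≥0∞) := by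
  rw [spectralRadius, quasispectrum_eq_spectrum_union_zero, iSup_union]
  simp

theorem spectralRadius_smul (c : 𝕜) (a : A) :
    spectralRadius 𝕜 (c • a) = ‖c‖₊ * spectralRadius 𝕜 a := by
  rcases eq_or_ne c 0 with rfl | hc
  · simp
  · have hsmul : spectrum 𝕜 (c • a) = (c • ·) '' spectrum 𝕜 a :=
      spectrum.unit_smul_eq_smul a (Units.mk0 c hc)
    simp only [spectralRadius, hsmul, iSup_image, smul_eq_mul, nnnorm_mul, ENNReal.coe_mul,
      ENNReal.mul_iSup]

theorem spectralRadius_add_le_max_of_mul_mem_jacobsonRadical {a b : A}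
    (hab : a * b ∈ jacobsonRadical A) :
    spectralRadius 𝕜 (a + b) ≤ max (spectralRadius 𝕜 a) (spectralRadius 𝕜 b) := by
  simp only [spectralRadius_eq_iSup_quasispectrum]
  exact (biSup_mono (quasispectrum_add_subset_of_mul_mem_jacobsonRadical hab)).trans_eq iSup_union

theorem spectralRadius_sum_le_sup_of_mul_mem_jacobsonRadical {ι : Type*} [LinearOrder ι]
    (s : Finset ι) (a : ι → A)
    (ha : ∀ i ∈ s, ∀ j ∈ s, j < i → a i * a j ∈ jacobsonRadical A) :
    spectralRadius 𝕜 (∑ i ∈ s, a i) ≤ s.sup fun i => spectralRadius 𝕜 (a i) := by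
  induction s using Finset.induction_on_max with
  | empty => simp
  | insert m s hm ih =>
    rw [Finset.sum_insert fun h => (hm m h).false, Finset.sup_insert]
    have hprod : a m * ∑ j ∈ s, a j ∈ jacobsonRadical A := by
      rw [Finset.mul_sum]
      exact sum_mem fun j hj => ha m (s.mem_insert_self m) j (Finset.mem_insert_of_mem hj) (hm j hj)
    refine (spectralRadius_add_le_max_of_mul_mem_jacobsonRadical hprod).trans ?_
    refine max_le_max le_rfl (ih fun i hi j hj => ?_)
    exact ha i (Finset.mem_insert_of_mem hi) j (Finset.mem_insert_of_mem hj)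

theorem spectralRadius_apply_le_of_map_mul_or_sq_mem_jacobsonRadical {B : Type*} [Ring B]
    [Algebra 𝕜 B] (f : B →ₗ[𝕜] A)
    (hf : (∀ x y, f (x * y) = f x * f y) ∨ ∀ x, f x ^ 2 ∈ jacobsonRadical A) (x : B) :
    spectralRadius 𝕜 (f x) ≤ spectralRadius 𝕜 x := by
  simp only [spectralRadius_eq_iSup_quasispectrum]
  exact biSup_mono (quasispectrum_apply_subset_of_map_mul_or_sq_mem_jacobsonRadical f hf x)

end SpectralRadius

theorem sum_of_homomorphisms_and_square_radical_spectrally_bounded_general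
    {A B ι : Type*} [Ring A] [Algebra ℂ A] [Ring B] [Algebra ℂ B] [Fintype ι] [LinearOrder ι]
    (T : ι → B →ₗ[ℂ] A)
    (hT : ∀ i, (∀ x y, T i (x * y) = T i x * T i y) ∨ ∀ x, T i x ^ 2 ∈ jacobsonRadical A)
    (hmul : ∀ i j, j < i → ∀ x, T i x * T j x ∈ jacobsonRadical A) (lam : ι → ℂ) :
    SpectrallyBounded fun x => ∑ i, lam i • T i x := by
  refine ⟨Finset.univ.sup fun i => ‖lam i‖₊, fun x => ?_⟩
  have hmul_smul (i j : ι) (hji : j < i) :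
      (lam i • T i x) * (lam j • T j x) ∈ jacobsonRadical A := by
    rw [smul_mul_smul_comm]
    exact Submodule.smul_of_tower_mem _ _ (hmul i j hji x)
  refine (spectralRadius_sum_le_sup_of_mul_mem_jacobsonRadical _ _
    fun i _ j _ => hmul_smul i j).trans (Finset.sup_le fun i hi => ?_)
  calc spectralRadius ℂ (lam i • T i x)
      = ‖lam i‖₊ * spectralRadius ℂ (T i x) := spectralRadius_smul _ _
    _ ≤ ‖lam i‖₊ * spectralRadius ℂ x := by
      gcongr
      exact spectralRadius_apply_le_of_map_mul_or_sq_mem_jacobsonRadical _ (hT i) x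
    _ ≤ (Finset.univ.sup fun i => ‖lam i‖₊ : ℝ≥0) * spectralRadius ℂ x := by
      gcongr
      exact Finset.le_sup (f := fun i => ‖lam i‖₊) hi

/-- **Proposition 2.4.** Let `A` be a unital complex Banach algebra and let
`T_1, …, T_n : A → A` be linear maps such that, for each `i`, either `T_i` is an
algebra homomorphism or `(T_i x)² ∈ rad A` for every `x ∈ A`.  Suppose moreover
that `(T_i y)(T_j x) ∈ rad A` for all `x, y ∈ A` whenever `i > j`.  Then for all
`λ_1, …, λ_n ∈ ℂ` the linear map `T = Σ_{i=1}^n λ_i T_i` is spectrally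
bounded. -/
theorem sum_of_homomorphisms_and_square_radical_spectrally_bounded
    {A : Type*} [NormedRing A] [NormedAlgebra ℂ A] [CompleteSpace A]
    {n : ℕ} (T : Fin n → A →ₗ[ℂ] A)
    (h₁ : ∀ i : Fin n, (∀ x y : A, T i (x * y) = T i x * T i y) ∨
      (∀ x : A, (T i x) ^ 2 ∈ jacobsonRadical A))
    (h₂ : ∀ i j : Fin n, j < i → ∀ x y : A, (T i y) * (T j x) ∈ jacobsonRadical A)
    (lam : Fin n → ℂ) :
    SpectrallyBounded (fun x : A => ∑ i, lam i • T i x) := by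
  exact sum_of_homomorphisms_and_square_radical_spectrally_bounded_general T h₁
    (fun i j hji x => h₂ i j hji x x) lam
end

section
/- Let A be a unital complex Banach algebra and let S be an elementary operator on A that can be written as S = Σ_{i=1}^n M_{u_i,v_i} with u_i, v_i ∈ A such that v_i u_j ∈ rad(A) whenever i > j and v_i u_i ∈ 𝒵(A) for every i. Then S is spectrally bounded. -/
open scoped ENNReal NNReal

/-! Passing to `A / rad A` changes no spectrum. There `Sx` is a sum of terms `a i = u i * x * v i`
with `a i * a j = 0` for `j < i`, so the product of the `k - a i` in decreasing order of `i` is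
`k ^ (n - 1) * (k - Sx)`, whence `r(Sx) ≤ max r(u i * x * v i)`. Now
`r(u i * x * v i) = r(v i * u i * x)`, and since `v i * u i` commutes with `x` modulo the radical,
Gelfand's formula bounds this by `r(v i * u i) * r(x)`. -/

instance jacobsonRadical.isTwoSided (A : Type*) [Ring A] : (jacobsonRadical A).IsTwoSided :=
  inferInstanceAs (Ideal.jacobson (⊥ : Ideal A)).IsTwoSided

theorem isUnit_of_sub_one_mem_jacobsonRadical {A : Type*} [Ring A] {a : A}
    (ha : a - 1 ∈ jacobsonRadical A) : IsUnit a := by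
  have exists_left_inv {b : A} (hb : b - 1 ∈ jacobsonRadical A) : ∃ c, c * b = 1 := by
    simpa [sub_eq_zero] using Ideal.exists_mul_sub_mem_of_sub_one_mem_jacobson b hb
  obtain ⟨b, hba⟩ := exists_left_inv ha
  -- `b` is congruent to `1` too, so it has a left inverse, which must be its right inverse `a`
  have hb : b - 1 ∈ jacobsonRadical A := by
    have : b - 1 = -b * (a - 1) := by rw [neg_mul, mul_sub, hba, mul_one, neg_sub]
    exact this ▸ Ideal.mul_mem_left _ _ ha
  obtain ⟨c, hcb⟩ := exists_left_inv hb
  obtain rfl : c = a := left_inv_eq_right_inv hcb hba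
  exact isUnit_iff_exists.2 ⟨b, hcb, hba⟩

instance isLocalHom_mkₐ_jacobsonRadical (R A : Type*) [CommSemiring R] [Ring A] [Algebra R A] :
    IsLocalHom (Ideal.Quotient.mkₐ R (jacobsonRadical A)) where
  map_nonunit a ha := by
    obtain ⟨b', hab', hb'a⟩ := isUnit_iff_exists.1 ha
    obtain ⟨b, rfl⟩ := Ideal.Quotient.mkₐ_surjective R _ b'
    have isUnit_of_map_eq_one {c : A} (hc : Ideal.Quotient.mkₐ R (jacobsonRadical A) c = 1) :
        IsUnit c :=
      isUnit_of_sub_one_mem_jacobsonRadical <| Ideal.Quotient.eq.1 hc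
    rw [← map_mul] at hab' hb'a
    obtain ⟨c, habc, -⟩ := isUnit_iff_exists.1 (isUnit_of_map_eq_one hab')
    obtain ⟨d, -, hdba⟩ := isUnit_iff_exists.1 (isUnit_of_map_eq_one hb'a)
    exact isUnit_iff_exists_and_exists.2
      ⟨⟨b * c, by rw [← mul_assoc, habc]⟩, ⟨d * b, by rw [mul_assoc, hdba]⟩⟩

theorem mkₐ_mul_mkₐ_eq_zero_of_mul_mem_jacobsonRadical {R A : Type*} [CommSemiring R] [Ring A]
    [Algebra R A] {u v x y u' v' : A} (h : v * u' ∈ jacobsonRadical A) :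
    Ideal.Quotient.mkₐ R (jacobsonRadical A) (u * x * v) *
      Ideal.Quotient.mkₐ R (jacobsonRadical A) (u' * y * v') = 0 := by
  rw [← map_mul, show u * x * v * (u' * y * v') = u * x * (v * u') * (y * v') by noncomm_ring]
  exact Ideal.Quotient.eq_zero_iff_mem.2 <|
    Ideal.mul_mem_right _ _ (Ideal.mul_mem_left _ _ h)

theorem commute_mkₐ_of_mem_centerModRadical {R A : Type*} [CommSemiring R] [Ring A] [Algebra R A]
    {a : A} (ha : a ∈ centerModRadical A) (b : A) :
    Commute (Ideal.Quotient.mkₐ R (jacobsonRadical A) a)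
      (Ideal.Quotient.mkₐ R (jacobsonRadical A) b) := by
  rw [commute_iff_eq, ← map_mul, ← map_mul]
  exact Ideal.Quotient.eq.2 (ha b)

theorem spectrum_apply_eq_of_isLocalHom {R A B : Type*} [CommSemiring R] [Ring A] [Algebra R A]
    [Ring B] [Algebra R B] (f : A →ₐ[R] B) [IsLocalHom f] (a : A) :
    spectrum R (f a) = spectrum R a := by
  ext k
  rw [spectrum.mem_iff, spectrum.mem_iff, ← f.commutes, ← map_sub, isUnit_map_iff]

theorem spectrum_add_diff_zero_subset {𝕜 A : Type*} [Field 𝕜] [Ring A] [Algebra 𝕜 A] {a b : A}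
    (hab : a * b = 0) : spectrum 𝕜 (a + b) \ {0} ⊆ spectrum 𝕜 a ∪ spectrum 𝕜 b := by
  rintro k ⟨hk, hk0 : k ≠ 0⟩
  by_contra h
  simp only [Set.mem_union, not_or, spectrum.notMem_iff] at h
  have factorization : (algebraMap 𝕜 A k - a) * (algebraMap 𝕜 A k - b) =
      algebraMap 𝕜 A k * (algebraMap 𝕜 A k - (a + b)) := by
    rw [sub_mul, mul_sub, mul_sub, hab, mul_sub, mul_add, Algebra.commutes k a]
    abel
  have hprod := factorization ▸ h.1.mul h.2
  exact spectrum.mem_iff.1 hk <| (hk0.isUnit.map (algebraMap 𝕜 A)).mul_left_iff.1 hprod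

section SpectralRadius

variable {𝕜 A : Type*} [NormedField 𝕜] [Ring A] [Algebra 𝕜 A]

theorem spectralRadius_apply_eq_of_isLocalHom {B : Type*} [Ring B] [Algebra 𝕜 B] (f : A →ₐ[𝕜] B)
    [IsLocalHom f] (a : A) : spectralRadius 𝕜 (f a) = spectralRadius 𝕜 a := by
  rw [spectralRadius, spectrum_apply_eq_of_isLocalHom, spectralRadius]

theorem spectralRadius_le_of_forall_ne_zero {a : A} {r : ℝ≥0∞}
    (h : ∀ k ∈ spectrum 𝕜 a, k ≠ 0 → (‖k‖₊ : ℝ≥0∞) ≤ r) : spectralRadius 𝕜 a ≤ r :=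
  iSup₂_le fun k hk ↦ by
    rcases eq_or_ne k 0 with rfl | hk0
    · simp
    · exact h k hk hk0

theorem spectralRadius_mul_comm (a b : A) :
    spectralRadius 𝕜 (a * b) = spectralRadius 𝕜 (b * a) := by
  have le (a b : A) : spectralRadius 𝕜 (a * b) ≤ spectralRadius 𝕜 (b * a) := by
    refine spectralRadius_le_of_forall_ne_zero fun k hk hk0 ↦ ?_
    have hk' : k ∈ spectrum 𝕜 (b * a) \ {0} := spectrum.nonzero_mul_comm (𝕜 := 𝕜) a b ▸ ⟨hk, hk0⟩
    exact le_iSup₂_of_le k hk'.1 le_rfl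
  exact (le a b).antisymm (le b a)

theorem spectralRadius_add_le_max {a b : A} (hab : a * b = 0) :
    spectralRadius 𝕜 (a + b) ≤ max (spectralRadius 𝕜 a) (spectralRadius 𝕜 b) := by
  refine spectralRadius_le_of_forall_ne_zero fun k hk hk0 ↦ ?_
  rcases spectrum_add_diff_zero_subset hab ⟨hk, hk0⟩ with hka | hkb
  · exact le_max_of_le_left (le_iSup₂_of_le k hka le_rfl)
  · exact le_max_of_le_right (le_iSup₂_of_le k hkb le_rfl)

theorem spectralRadius_sum_le_sup {ι : Type*} [LinearOrder ι] (s : Finset ι) {a : ι → A}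
    (ha : ∀ i ∈ s, ∀ j ∈ s, j < i → a i * a j = 0) :
    spectralRadius 𝕜 (∑ i ∈ s, a i) ≤ s.sup fun i ↦ spectralRadius 𝕜 (a i) := by
  induction s using Finset.induction_on_max with
  | empty => simp
  | insert m s hlt ih =>
    have hm : m ∉ s := fun hm ↦ (hlt m hm).false
    have head_mul_tail : a m * ∑ i ∈ s, a i = 0 := by
      rw [Finset.mul_sum]
      exact Finset.sum_eq_zero fun i hi ↦
        ha m (Finset.mem_insert_self m s) i (Finset.mem_insert_of_mem hi) (hlt i hi)
    rw [Finset.sum_insert hm, Finset.sup_insert]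
    refine (spectralRadius_add_le_max head_mul_tail).trans (sup_le_sup_left (ih ?_) _)
    exact fun i hi j hj ↦ ha i (Finset.mem_insert_of_mem hi) j (Finset.mem_insert_of_mem hj)

end SpectralRadius

theorem spectralRadius_le_nnnorm_of_completeSpace {𝕜 A : Type*} [NormedField 𝕜] [NormedRing A]
    [NormedAlgebra 𝕜 A] [CompleteSpace A] (a : A) : spectralRadius 𝕜 a ≤ ‖a‖₊ := by
  refine spectralRadius_le_of_forall_ne_zero fun k hk hk0 ↦ ?_
  by_contra! hlt
  have norm_lt_one : ‖k⁻¹ • a‖ < 1 := by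
    rw [norm_smul, norm_inv, inv_mul_lt_one₀ (norm_pos_iff.2 hk0)]
    exact_mod_cast hlt
  have factorization : algebraMap 𝕜 A k - a = Units.mk0 k hk0 • (1 - k⁻¹ • a) := by
    simp [Units.smul_def, smul_sub, smul_smul, hk0, Algebra.algebraMap_eq_smul_one]
  refine spectrum.mem_iff.1 hk ?_
  rw [factorization, isUnit_smul_iff]
  exact isUnit_one_sub_of_norm_lt_one norm_lt_one

section BanachAlgebra

variable {A B : Type*} [NormedRing A] [NormedAlgebra ℂ A] [CompleteSpace A] [Ring B] [Algebra ℂ B]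
  (f : A →ₐ[ℂ] B) [IsLocalHom f]

theorem spectralRadius_mul_le_of_commute_map {a b : A} (hab : Commute (f a) (f b)) :
    spectralRadius ℂ (a * b) ≤ spectralRadius ℂ a * spectralRadius ℂ b := by
  have ne_top (c : A) : spectralRadius ℂ c ≠ ∞ :=
    ne_top_of_le_ne_top ENNReal.coe_ne_top (spectralRadius_le_nnnorm_of_completeSpace c)
  have pow_le (n : ℕ) (hn : n ≠ 0) :
      spectralRadius ℂ (a * b) ^ n ≤ (‖a ^ n‖₊ : ℝ≥0∞) * ‖b ^ n‖₊ :=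
    calc spectralRadius ℂ (a * b) ^ n
      _ ≤ spectralRadius ℂ ((a * b) ^ n) := spectrum.spectralRadius_pow_le _ n hn
      _ = spectralRadius ℂ (f (a ^ n * b ^ n)) := by
        rw [← spectralRadius_apply_eq_of_isLocalHom f, map_pow, map_mul, hab.mul_pow, map_mul,
          map_pow, map_pow]
      _ ≤ ‖a ^ n * b ^ n‖₊ := by
        rw [spectralRadius_apply_eq_of_isLocalHom]
        exact spectralRadius_le_nnnorm_of_completeSpace _
      _ ≤ (‖a ^ n‖₊ : ℝ≥0∞) * ‖b ^ n‖₊ := mod_cast nnnorm_mul_le _ _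
  refine ge_of_tendsto (ENNReal.Tendsto.mul
    (spectrum.pow_nnnorm_pow_one_div_tendsto_nhds_spectralRadius a) (.inr (ne_top b))
    (spectrum.pow_nnnorm_pow_one_div_tendsto_nhds_spectralRadius b) (.inr (ne_top a))) ?_
  filter_upwards [Filter.eventually_gt_atTop 0] with n hn
  rw [← ENNReal.mul_rpow_of_nonneg _ _ (by positivity), one_div,
    ENNReal.le_rpow_inv_iff (by positivity), ENNReal.rpow_natCast]
  exact pow_le n hn.ne'

theorem spectralRadius_mul_mul_le_of_commute_map {u v x : A} (h : Commute (f (v * u)) (f x)) :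
    spectralRadius ℂ (u * x * v) ≤ spectralRadius ℂ (v * u) * spectralRadius ℂ x := by
  rw [spectralRadius_mul_comm, ← mul_assoc]
  exact spectralRadius_mul_le_of_commute_map f h

end BanachAlgebra

/-- **Corollary 2.5.** Let `A` be a unital complex Banach algebra and let `S` be
an elementary operator on `A` that can be written as `S = Σ_{i=1}^n M_{u_i,v_i}`
with `v_i u_j ∈ rad A` whenever `i > j` and `v_i u_i ∈ 𝒵(A)` for every `i`.
Then `S` is spectrally bounded. -/
theorem elementary_operator_triangular_form_spectrally_bounded
    {A : Type*} [NormedRing A] [NormedAlgebra ℂ A] [CompleteSpace A]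
    {n : ℕ} (u v : Fin n → A)
    (h₁ : ∀ i j : Fin n, j < i → v i * u j ∈ jacobsonRadical A)
    (h₂ : ∀ i : Fin n, v i * u i ∈ centerModRadical A) :
    SpectrallyBounded (fun x : A => ∑ i, u i * x * v i) := by
  set π := Ideal.Quotient.mkₐ ℂ (jacobsonRadical A)
  refine ⟨Finset.univ.sup fun i ↦ ‖v i * u i‖₊, fun x ↦ ?_⟩
  have term_le (i : Fin n) : spectralRadius ℂ (u i * x * v i) ≤ ‖v i * u i‖₊ * spectralRadius ℂ x :=
    (spectralRadius_mul_mul_le_of_commute_map π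
      (commute_mkₐ_of_mem_centerModRadical (h₂ i) x)).trans <|
      mul_le_mul_left (spectralRadius_le_nnnorm_of_completeSpace _) _
  calc spectralRadius ℂ (∑ i, u i * x * v i)
    _ = spectralRadius ℂ (∑ i, π (u i * x * v i)) := by
      rw [← map_sum, spectralRadius_apply_eq_of_isLocalHom]
    _ ≤ Finset.univ.sup fun i ↦ spectralRadius ℂ (π (u i * x * v i)) :=
      spectralRadius_sum_le_sup _ fun i _ j _ hij ↦
        mkₐ_mul_mkₐ_eq_zero_of_mul_mem_jacobsonRadical (h₁ i j hij)
    _ = Finset.univ.sup fun i ↦ spectralRadius ℂ (u i * x * v i) := by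
      simp only [spectralRadius_apply_eq_of_isLocalHom]
    _ ≤ (Finset.univ.sup fun i ↦ ‖v i * u i‖₊ : ℝ≥0) * spectralRadius ℂ x :=
      Finset.sup_le fun i hi ↦ (term_le i).trans <| by
        gcongr
        exact Finset.le_sup (f := fun i ↦ ‖v i * u i‖₊) hi
end

section
/- Let X be a complex vector space and let V_1, …, V_k be finite-dimensional subspaces of the space L(X) of all linear maps on X. Then there exists a vector ζ ∈ X such that dim{vζ : v ∈ V_i} = lDim V_i for all 1 ≤ i ≤ k. -/
open scoped ENNReal NNReal

/-- The image `{vζ : v ∈ V}` of a space of linear maps under evaluation at `ζ`. -/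
noncomputable def evalSubspace {X : Type*} [AddCommGroup X] [Module ℂ X]
    (V : Submodule ℂ (X →ₗ[ℂ] X)) (ζ : X) : Submodule ℂ X :=
  V.map (LinearMap.applyₗ ζ)

/-- The local dimension `lDim V = max {dim V ζ : ζ ∈ X}` of a finite-dimensional
space `V` of linear maps on `X`. -/
noncomputable def localDim {X : Type*} [AddCommGroup X] [Module ℂ X]
    (V : Submodule ℂ (X →ₗ[ℂ] X)) : ℕ :=
  sSup {n : ℕ | ∃ ζ : X, n = Module.finrank ℂ (evalSubspace V ζ)}

/-! The rank of a linear map is lower semicontinuous along lines: `rank f ≤ rank (f + t • g)` for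
all but finitely many scalars `t`. If `f` is injective with left inverse `p`, then
`p ∘ (f + t • g) = 1 + t • (p ∘ g)` fails to be injective only when `-t⁻¹` is an eigenvalue of
`p ∘ g`; a general `f` of finite rank is reduced to this by a section of `f` over its range. If `f`
has infinite rank, there is at most one exceptional `t`, since `f` is a linear combination of any
two maps `f + s • g` and `f + t • g` with `s ≠ t`. Hence all but finitely many points `ξ` of a line
through `ζ` and `η` satisfy `dim V_i ζ ≤ dim V_i ξ` and `dim V_i η ≤ dim V_i ξ` for every `i`, so
finitely many vectors can be dominated by a single one. -/

open Cardinal Filter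

section LineOfLinearMaps

variable {K : Type*} [Field K] {E F : Type*} [AddCommGroup E] [Module K E]
  [AddCommGroup F] [Module K F]

theorem eventually_cofinite_injective_one_add_smul [FiniteDimensional K E] (T : Module.End K E) :
    ∀ᶠ t : K in cofinite, Function.Injective (1 + t • T : Module.End K E) := by
  have not_eigenvalue : ∀ᶠ t : K in cofinite, ¬ T.HasEigenvalue (-t⁻¹) :=
    (neg_injective.comp inv_injective).tendsto_cofinite.eventually
      T.finite_hasEigenvalue.eventually_cofinite_notMem
  filter_upwards [not_eigenvalue, eventually_cofinite_ne 0] with t ht ht0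
  refine (injective_iff_map_eq_zero _).2 fun x hx => ?_
  by_contra hx0
  refine ht (Module.End.hasEigenvalue_of_hasEigenvector
    (Module.End.hasEigenvector_iff.2 ⟨Module.End.mem_eigenspace_iff.2 ?_, hx0⟩))
  have hTx : t • T x = -x := (neg_eq_of_add_eq_zero_right (by simpa using hx)).symm
  rw [neg_smul, ← smul_neg, ← hTx, inv_smul_smul₀ ht0]

theorem eventually_cofinite_injective_add_smul [FiniteDimensional K E]
    {f : E →ₗ[K] F} (hf : Function.Injective f) (g : E →ₗ[K] F) :
    ∀ᶠ t : K in cofinite, Function.Injective (f + t • g) := by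
  obtain ⟨p, hp⟩ := f.exists_leftInverse_of_injective (LinearMap.ker_eq_bot.2 hf)
  filter_upwards [eventually_cofinite_injective_one_add_smul (p ∘ₗ g)] with t ht
  have comp_eq : p ∘ₗ (f + t • g) = 1 + t • (p ∘ₗ g) := by
    rw [LinearMap.comp_add, LinearMap.comp_smul, hp, Module.End.one_eq_id]
  refine Function.Injective.of_comp (f := p) ?_
  rw [← LinearMap.coe_comp, comp_eq]
  exact ht

theorem eventually_cofinite_rank_le_rank_add_smul_of_lt_aleph0 {f : E →ₗ[K] F}
    (hf : f.rank < ℵ₀) (g : E →ₗ[K] F) :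
    ∀ᶠ t : K in cofinite, f.rank ≤ (f + t • g).rank := by
  have : FiniteDimensional K f.range := Module.rank_lt_aleph0_iff.1 hf
  obtain ⟨s, hs⟩ := f.rangeRestrict.exists_rightInverse_of_surjective f.range_rangeRestrict
  have hfs : f ∘ₗ s = f.range.subtype :=
    LinearMap.ext fun y => congr_arg Subtype.val (LinearMap.congr_fun hs y)
  filter_upwards [eventually_cofinite_injective_add_smul f.range.injective_subtype (g ∘ₗ s)]
    with t ht
  calc f.rank = (f.range.subtype + t • (g ∘ₗ s)).rank := (rank_range_of_injective _ ht).symm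
    _ = ((f + t • g) ∘ₗ s).rank := by rw [LinearMap.add_comp, LinearMap.smul_comp, hfs]
    _ ≤ (f + t • g).rank := LinearMap.rank_comp_le_left _ _

theorem rank_le_rank_add_smul_add_rank_add_smul (f g : E →ₗ[K] F) {s t : K} (hst : s ≠ t) :
    f.rank ≤ (f + s • g).rank + (f + t • g).rank := by
  have hts : t - s ≠ 0 := sub_ne_zero.2 hst.symm
  calc f.rank = ((t / (t - s)) • (f + s • g) + (-s / (t - s)) • (f + t • g)).rank := by
        congr 1
        match_scalars <;> field_simp <;> ring
    _ ≤ ((t / (t - s)) • (f + s • g)).rank + ((-s / (t - s)) • (f + t • g)).rank :=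
        LinearMap.rank_add_le _ _
    _ ≤ (f + s • g).rank + (f + t • g).rank :=
        add_le_add (Submodule.rank_mono (LinearMap.range_smul_le_range _ _))
          (Submodule.rank_mono (LinearMap.range_smul_le_range _ _))

theorem subsingleton_rank_add_smul_lt_of_aleph0_le {f : E →ₗ[K] F} (hf : ℵ₀ ≤ f.rank)
    (g : E →ₗ[K] F) : {t : K | (f + t • g).rank < f.rank}.Subsingleton := by
  intro s hs t ht
  by_contra hst
  exact (rank_le_rank_add_smul_add_rank_add_smul f g hst).not_gt (add_lt_of_lt hf hs ht)

theorem eventually_cofinite_rank_le_rank_add_smul (f g : E →ₗ[K] F) :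
    ∀ᶠ t : K in cofinite, f.rank ≤ (f + t • g).rank := by
  rcases lt_or_ge f.rank ℵ₀ with hf | hf
  · exact eventually_cofinite_rank_le_rank_add_smul_of_lt_aleph0 hf g
  · simpa only [eventually_cofinite, not_le] using
      (subsingleton_rank_add_smul_lt_of_aleph0_le hf g).finite

theorem eventually_cofinite_rank_le_rank_lineMap (f g : E →ₗ[K] F) :
    ∀ᶠ t : K in cofinite, f.rank ≤ (AffineMap.lineMap f g t).rank := by
  simpa only [AffineMap.lineMap_apply_module', add_comm] using
    eventually_cofinite_rank_le_rank_add_smul f (g - f)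

end LineOfLinearMaps

section LocalDimension

variable {K : Type*} [Field K] {X Y : Type*} [AddCommGroup X] [Module K X]
  [AddCommGroup Y] [Module K Y]

theorem directed_rank_apply [Infinite K] {ι : Type*} [Finite ι] {E F : ι → Type*}
    [∀ i, AddCommGroup (E i)] [∀ i, Module K (E i)] [∀ i, AddCommGroup (F i)]
    [∀ i, Module K (F i)] (B : ∀ i, X →ₗ[K] E i →ₗ[K] F i) :
    Directed (· ≤ ·) fun ζ i => (B i ζ).rank := by
  intro ζ η
  have rank_ζ_le : ∀ᶠ t : K in cofinite, ∀ i,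
      (B i ζ).rank ≤ (AffineMap.lineMap (B i ζ) (B i η) t).rank :=
    eventually_all.2 fun i => eventually_cofinite_rank_le_rank_lineMap _ _
  have rank_η_le : ∀ᶠ t : K in cofinite, ∀ i,
      (B i η).rank ≤ (AffineMap.lineMap (B i ζ) (B i η) t).rank := by
    refine eventually_all.2 fun i => ?_
    simpa only [AffineMap.lineMap_apply_one_sub] using
      (sub_right_injective (b := (1 : K))).tendsto_cofinite.eventually
        (eventually_cofinite_rank_le_rank_lineMap (B i η) (B i ζ))
  obtain ⟨t, hζ, hη⟩ := (rank_ζ_le.and rank_η_le).exists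
  have map_lineMap (i : ι) :
      B i (AffineMap.lineMap ζ η t) = AffineMap.lineMap (B i ζ) (B i η) t := by
    simp only [AffineMap.lineMap_apply_module, map_add, map_smul]
  refine ⟨AffineMap.lineMap ζ η t, fun i => ?_, fun i => ?_⟩
  · simpa only [map_lineMap] using hζ i
  · simpa only [map_lineMap] using hη i

/-- The vector `ζ` attains the local dimension of the space `V` of linear maps, i.e. the dimension
of `V ζ` is the largest among all `V ξ`. Dimensions are cardinals, so `V` may be infinite
dimensional. -/
def AttainsLocalDim (V : Submodule K (X →ₗ[K] Y)) (ζ : X) : Prop :=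
  ∀ ξ : X, Module.rank K (V.map (LinearMap.applyₗ ξ)) ≤ Module.rank K (V.map (LinearMap.applyₗ ζ))

theorem exists_attainsLocalDim (V : Submodule K (X →ₗ[K] Y)) [FiniteDimensional K V] :
    ∃ ζ, AttainsLocalDim V ζ := by
  have bounded : BddAbove (Set.range fun ζ : X =>
      Module.finrank K (V.map (LinearMap.applyₗ ζ))) := by
    refine ⟨Module.finrank K V, ?_⟩
    rintro _ ⟨ζ, rfl⟩
    exact Submodule.finrank_map_le _ _
  obtain ⟨_, ⟨ζ, rfl⟩, hζ⟩ := bounded.exists_isGreatest_of_nonempty (Set.range_nonempty _)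
  refine ⟨ζ, fun ξ => ?_⟩
  rw [← Module.finrank_eq_rank, ← Module.finrank_eq_rank, Nat.cast_le]
  exact hζ ⟨ξ, rfl⟩

theorem range_flip_subtype_apply (V : Submodule K (X →ₗ[K] Y)) (ζ : X) :
    (V.subtype.flip ζ).range = V.map (LinearMap.applyₗ ζ) := by
  ext y
  simp

theorem exists_common_vector_attaining_local_dimension_general [Infinite K]
    {ι : Type*} [Finite ι] (V : ι → Submodule K (X →ₗ[K] Y))
    (hV : ∀ i, ∃ η, AttainsLocalDim (V i) η) :
    ∃ ζ, ∀ i, AttainsLocalDim (V i) ζ := by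
  choose η hη using hV
  obtain ⟨ζ, hζ⟩ := (directed_rank_apply fun i => (V i).subtype.flip).finite_le η
  refine ⟨ζ, fun i ξ => (hη i ξ).trans ?_⟩
  rw [← range_flip_subtype_apply, ← range_flip_subtype_apply]
  exact hζ i i

end LocalDimension

theorem AttainsLocalDim.finrank_evalSubspace_eq {X : Type*} [AddCommGroup X] [Module ℂ X]
    {V : Submodule ℂ (X →ₗ[ℂ] X)} [FiniteDimensional ℂ V] {ζ : X} (hζ : AttainsLocalDim V ζ) :
    Module.finrank ℂ (evalSubspace V ζ) = localDim V := by
  have finite_eval : Module.Finite ℂ (evalSubspace V ζ) := Module.Finite.map V _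
  have greatest : IsGreatest {n : ℕ | ∃ ξ : X, n = Module.finrank ℂ (evalSubspace V ξ)}
      (Module.finrank ℂ (evalSubspace V ζ)) := by
    refine ⟨⟨ζ, rfl⟩, ?_⟩
    rintro _ ⟨ξ, rfl⟩
    exact toNat_le_toNat (hζ ξ) (Module.rank_lt_aleph0 ℂ (evalSubspace V ζ))
  exact greatest.csSup_eq.symm

/-- **Lemma 2.6.** Let `X` be a complex vector space and let `V_1, …, V_k` be
finite-dimensional subspaces of the space of all linear maps on `X`.  Then there
exists a vector `ζ ∈ X` such that `dim {vζ : v ∈ V_i} = lDim V_i` for all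
`1 ≤ i ≤ k`. -/
theorem exists_common_vector_attaining_local_dimension
    {X : Type*} [AddCommGroup X] [Module ℂ X]
    {k : ℕ} (V : Fin k → Submodule ℂ (X →ₗ[ℂ] X))
    (hV : ∀ i, FiniteDimensional ℂ (V i)) :
    ∃ ζ : X, ∀ i, Module.finrank ℂ (evalSubspace (V i) ζ) = localDim (V i) := by
  obtain ⟨ζ, hζ⟩ := exists_common_vector_attaining_local_dimension_general V
    fun i => exists_attainsLocalDim (V i)
  exact ⟨ζ, fun i => (hζ i).finrank_evalSubspace_eq⟩
end

section
/- Let A be a unital complex Banach algebra and let S = Σ_{i=1}^n M_{a_i,b_i} be an elementary operator on A. If r(Sx) = 0 for every x ∈ A, then Σ_{i=1}^n b_i a_i belongs to rad(A). -/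
open scoped ENNReal NNReal

/-!
On a simple module `X = A ⧸ m`, every `A`-linear endomorphism is continuous, hence has nonempty
spectrum, hence is a scalar by Schur's lemma. If `c = ∑ bᵢ aᵢ` moved some `y : X` to a nonzero
vector, take a functional `f` with `f (c y) ≠ 0`. The finite-rank operator `w ↦ ∑ f (bᵢ w) • aᵢ y`
has trace `f (c y)`, hence an eigenvector `w` with eigenvalue `z ≠ 0`. By Jacobson density some
`x : A` acts on the finitely many vectors `bᵢ w` as `f(·) • y`; then `w` is an eigenvector of
`∑ aᵢ x bᵢ`, so `z` lies in the spectrum of this element, whose spectral radius is thus nonzero.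
-/

open Module UniformSpace

section FiniteRank

theorem hasEigenvector_comp_comm {R V W : Type*} [CommRing R] [IsDomain R]
    [AddCommGroup V] [Module R V] [IsTorsionFree R V] [AddCommGroup W] [Module R W]
    {f : V →ₗ[R] W} {g : W →ₗ[R] V} {z : R} (hz : z ≠ 0) {v : V}
    (hv : End.HasEigenvector (g ∘ₗ f) z v) : End.HasEigenvector (f ∘ₗ g) z (f v) := by
  have hgf : g (f v) = z • v := hv.apply_eq_smul
  refine ⟨End.mem_eigenspace_iff.mpr ?_, fun hfv ↦ smul_ne_zero hz hv.2 ?_⟩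
  · rw [LinearMap.comp_apply, hgf, map_smul]
  · rw [← hgf, hfv, map_zero]

variable {K : Type*} [Field K] [IsAlgClosed K]

theorem exists_hasEigenvalue_ne_zero_of_trace_ne_zero_s7 {V : Type*} [AddCommGroup V] [Module K V]
    [Module.Finite K V] {T : End K V} (hT : LinearMap.trace K V T ≠ 0) :
    ∃ z ≠ 0, T.HasEigenvalue z := by
  contrapose! hT
  rw [End.trace_eq_sum_roots_charpoly_of_splits (IsAlgClosed.splits _)]
  refine Multiset.sum_eq_zero fun z hz ↦ ?_
  by_contra hz0
  exact hT z hz0 (T.hasEigenvalue_iff_isRoot_charpoly z |>.mpr (Polynomial.isRoot_of_mem_roots hz))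

theorem exists_hasEigenvector_sum_smulRight {X ι : Type*} [AddCommGroup X] [Module K X]
    [Fintype ι] (φ : ι → Dual K X) (u : ι → X) (htrace : ∑ i, φ i (u i) ≠ 0) :
    ∃ z ≠ 0, ∃ w, End.HasEigenvector (∑ i, (φ i).smulRight (u i)) z w := by
  classical
  have hfactor : ∑ i, (φ i).smulRight (u i) =
      Fintype.linearCombination K u ∘ₗ LinearMap.pi φ := by
    ext w
    simp [Fintype.linearCombination_apply]
  have htrace_comm : LinearMap.trace K (ι → K)
      (LinearMap.pi φ ∘ₗ Fintype.linearCombination K u) = ∑ i, φ i (u i) := by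
    simp [LinearMap.trace_eq_matrix_trace K (Pi.basisFun K ι), Matrix.trace]
  obtain ⟨z, hz, hev⟩ := exists_hasEigenvalue_ne_zero_of_trace_ne_zero_s7 (htrace_comm ▸ htrace)
  obtain ⟨t, ht⟩ := hev.exists_hasEigenvector
  exact ⟨z, hz, _, hfactor ▸ hasEigenvector_comp_comm hz ht⟩

end FiniteRank

section Density

variable {K A X : Type*} [Ring A] [AddCommGroup X] [Module A X]

theorem exists_smul_eq_of_surjective_algebraMap_end [CommRing K] [Algebra K A] [Module K X]
    [IsScalarTower K A X] [IsSemisimpleModule A X]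
    (hschur : Function.Surjective (algebraMap K (End A X))) (g : End K X) (s : Finset X) :
    ∃ x : A, ∀ w ∈ s, x • w = g w := by
  let g' : End (End A X) X :=
    { toFun := g
      map_add' := map_add g
      map_smul' := fun D w ↦ by
        obtain ⟨z, rfl⟩ := hschur D
        exact map_smul g z w }
  obtain ⟨x, hx⟩ := jacobson_density g' s
  exact ⟨x, fun w hw ↦ (hx w hw).symm⟩

theorem mem_spectrum_of_smul_eq_smul_s7 [CommRing K] [Algebra K A] [Module K X]
    [IsScalarTower K A X] {c : A} {z : K} {w : X} (hw : w ≠ 0) (hcw : c • w = z • w) :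
    z ∈ spectrum K c := fun hu ↦
  hw <| hu.smul_eq_zero.mp <| by rw [sub_smul, algebraMap_smul, hcw, sub_self]

theorem exists_mem_spectrum_ne_zero_of_smul_ne_zero [Field K] [IsAlgClosed K] [Algebra K A]
    [Module K X] [IsScalarTower K A X] [IsSemisimpleModule A X]
    (hschur : Function.Surjective (algebraMap K (End A X)))
    {ι : Type*} [Fintype ι] (a b : ι → A) {y : X} (hy : (∑ i, b i * a i) • y ≠ 0) :
    ∃ x : A, ∃ z ∈ spectrum K (∑ i, a i * x * b i), z ≠ 0 := by
  classical
  obtain ⟨f, hf⟩ : ∃ f : Dual K X, f ((∑ i, b i * a i) • y) ≠ 0 := by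
    simpa using (forall_dual_apply_eq_zero_iff K _).not.mpr hy
  have htrace : ∑ i, (f ∘ₗ Algebra.lsmul K K X (b i)) (a i • y) ≠ 0 := by
    simpa [Finset.sum_smul, mul_smul] using hf
  obtain ⟨z, hz, w, hw⟩ := exists_hasEigenvector_sum_smulRight _ _ htrace
  obtain ⟨x, hx⟩ := exists_smul_eq_of_surjective_algebraMap_end hschur (f.smulRight y)
    (Finset.univ.image fun i ↦ b i • w)
  refine ⟨x, z, mem_spectrum_of_smul_eq_smul_s7 hw.2 ?_, hz⟩
  have hxb (i : ι) : x • b i • w = f (b i • w) • y := by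
    simpa using hx _ (Finset.mem_image_of_mem _ (Finset.mem_univ i))
  calc (∑ i, a i * x * b i) • w
      = ∑ i, f (b i • w) • a i • y := by
        simp only [Finset.sum_smul, mul_smul, hxb, smul_comm (a _) (f _)]
    _ = z • w := by simpa using hw.apply_eq_smul

end Density

section Schur

theorem spectrum_nonempty_of_normedAlgebra {B : Type*} [NormedRing B] [NormedAlgebra ℂ B]
    [Nontrivial B] (T : B) : (spectrum ℂ T).Nonempty := by
  let : NormedAlgebra ℂ (Completion B) := { norm_smul_le := norm_smul_le }
  let ι : B →ₐ[ℂ] Completion B := { Completion.coeRingHom with commutes' := fun _ ↦ rfl }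
  have : Nontrivial (Completion B) := Completion.coe_injective B |>.nontrivial
  exact (spectrum.nonempty (ι T)).mono (AlgHom.spectrum_apply_subset ι T)

theorem surjective_algebraMap_of_forall_spectrum_nonempty {K D : Type*} [CommRing K]
    [DivisionRing D] [Algebra K D] (h : ∀ d : D, (spectrum K d).Nonempty) :
    Function.Surjective (algebraMap K D) := by
  intro d
  obtain ⟨z, hz⟩ := h d
  rw [spectrum.mem_iff, isUnit_iff_ne_zero, not_not, sub_eq_zero] at hz
  exact ⟨z, hz⟩

theorem surjective_algebraMap_end_of_forall_continuous {A X : Type*} [Ring A] [Algebra ℂ A]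
    [NormedAddCommGroup X] [NormedSpace ℂ X] [Module A X] [IsScalarTower ℂ A X]
    [IsSimpleModule A X] (hcont : ∀ D : End A X, Continuous D) :
    Function.Surjective (algebraMap ℂ (End A X)) := by
  classical
  let Φ : End A X →ₐ[ℂ] (X →L[ℂ] X) := AlgHom.ofLinearMap
    { toFun D := ⟨D.restrictScalars ℂ, hcont D⟩
      map_add' _ _ := rfl
      map_smul' _ _ := rfl } rfl fun _ _ ↦ rfl
  have : Nontrivial X := IsSimpleModule.nontrivial A X
  have hspec (D : End A X) : (spectrum ℂ D).Nonempty :=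
    (spectrum_nonempty_of_normedAlgebra (Φ D)).mono (AlgHom.spectrum_apply_subset Φ D)
  exact surjective_algebraMap_of_forall_spectrum_nonempty hspec

theorem surjective_algebraMap_end_quotient_s7 {A : Type*} [NormedRing A] [NormedAlgebra ℂ A]
    (m : Ideal A) [m.IsMaximal] [IsClosed (m : Set A)] :
    Function.Surjective (algebraMap ℂ (End A (A ⧸ m))) :=
  have : IsSimpleModule A (A ⧸ m) := isSimpleModule_iff_isCoatom.mpr Ideal.IsMaximal.out
  surjective_algebraMap_end_of_forall_continuous IsModuleTopology.continuous_of_linearMap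

end Schur

theorem mem_jacobsonRadical_of_forall_smul_eq_zero {A : Type*} [Ring A] {c : A}
    (hc : ∀ m : Ideal A, m.IsMaximal → ∀ y : A ⧸ m, c • y = 0) : c ∈ jacobsonRadical A := by
  rw [jacobsonRadical, Ideal.jacobson, Submodule.mem_sInf]
  rintro m ⟨-, hm⟩
  simpa [← Submodule.Quotient.mk_smul, Submodule.Quotient.mk_eq_zero] using
    hc m hm (Submodule.Quotient.mk 1)

theorem eq_zero_of_mem_spectrum_of_spectralRadius_eq_zero {𝕜 A : Type*} [NormedField 𝕜] [Ring A]
    [Algebra 𝕜 A] {c : A} (hc : spectralRadius 𝕜 c = 0) {z : 𝕜} (hz : z ∈ spectrum 𝕜 c) :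
    z = 0 := by
  by_contra hz0
  exact hz (spectrum.mem_resolventSet_of_spectralRadius_lt (by simpa [hc] using hz0))

theorem spectrally_infinitesimal_elementary_operator_sum_mem_radical_general
    {A : Type*} [NormedRing A] [NormedAlgebra ℂ A] [HasSummableGeomSeries A]
    {ι : Type*} [Fintype ι] (a b : ι → A)
    (hS : ∀ x : A, spectralRadius ℂ (∑ i, a i * x * b i) = 0) :
    (∑ i, b i * a i) ∈ jacobsonRadical A := by
  refine mem_jacobsonRadical_of_forall_smul_eq_zero fun m hm y ↦ ?_
  by_contra hy
  have : IsSimpleModule A (A ⧸ m) := isSimpleModule_iff_isCoatom.mpr hm.out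
  obtain ⟨x, z, hz, hz0⟩ := exists_mem_spectrum_ne_zero_of_smul_ne_zero
    (surjective_algebraMap_end_quotient_s7 m) a b hy
  exact hz0 (eq_zero_of_mem_spectrum_of_spectralRadius_eq_zero (hS x) hz)

/-- **Proposition 3.1.** Let `A` be a unital complex Banach algebra and let
`S = Σ_{i=1}^n M_{a_i,b_i}` be an elementary operator on `A`.  If `r(Sx) = 0`
for every `x ∈ A`, then `Σ_{i=1}^n b_i a_i` belongs to `rad A`. -/
theorem spectrally_infinitesimal_elementary_operator_sum_mem_radical
    {A : Type*} [NormedRing A] [NormedAlgebra ℂ A] [CompleteSpace A]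
    {n : ℕ} (a b : Fin n → A)
    (hS : ∀ x : A, spectralRadius ℂ (∑ i, a i * x * b i) = 0) :
    (∑ i, b i * a i) ∈ jacobsonRadical A :=
  spectrally_infinitesimal_elementary_operator_sum_mem_radical_general a b hS
end

section
/- Let A be a unital complex Banach algebra and let S = Σ_{i=1}^n M_{a_i,b_i} be a spectrally bounded elementary operator on A. Then Σ_{i=1}^n b_i a_i belongs to 𝒵(A), the centre modulo the radical. -/
/-! On a simple module `X = A ⧸ L` the commutant is `ℂ`, so `A` acts densely. Suppose that `ξ` and
`w ξ` are linearly independent for `w = ∑ bᵢ aᵢ`, and choose a functional `f` with `f ξ = 0` and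
`f (w ξ) ≠ 0`. The finite rank operator `∑ aᵢ (ξ ⊗ f) bᵢ` has trace `f (w ξ)`, hence a nonzero
eigenvalue `μ`. By density some `x` acts like `ξ ⊗ f` on the finitely many vectors that matter, and
conjugating `x` by units that contract `ξ` and are the identity modulo `ξ` replaces `ξ ⊗ f` by
arbitrarily large multiples of itself. The spectral radius of `∑ aᵢ x bᵢ` is therefore unbounded
along the similarity orbit of `x`, on which the spectral radius of `x` is constant: a contradiction.
So every vector of `X` is an eigenvector of `w`, that is, `w` acts as a scalar, and its commutators
lie in every maximal left ideal. -/

open scoped ENNReal NNReal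

section LinearAlgebra

variable {K V W : Type*} [Field K] [AddCommGroup V] [Module K V] [AddCommGroup W] [Module K W]

theorem exists_forall_eq_smul_of_forall_mem_span_singleton {T : Module.End K V}
    (hT : ∀ v, T v ∈ K ∙ v) : ∃ c : K, ∀ v, T v = c • v := by
  obtain ⟨c, hc⟩ : ∃ c : K, T = c • 1 := by
    refine LinearMap.exists_eq_smul_id_of_forall_notLinearIndependent fun v hv ↦ ?_
    obtain ⟨c, hc⟩ := Submodule.mem_span_singleton.mp (hT v)
    exact (LinearIndependent.pair_iff' (hv.ne_zero 0)).mp hv c hc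
  exact ⟨c, LinearMap.congr_fun hc⟩

theorem hasEigenvalue_comp_comm {P : V →ₗ[K] W} {Q : W →ₗ[K] V} {μ : K} (hμ : μ ≠ 0)
    (h : Module.End.HasEigenvalue (Q ∘ₗ P) μ) : Module.End.HasEigenvalue (P ∘ₗ Q) μ := by
  obtain ⟨v, hv⟩ := h.exists_hasEigenvector
  have hQP : Q (P v) = μ • v := hv.apply_eq_smul
  have hPv : P v ≠ 0 := fun h0 ↦ smul_ne_zero hμ hv.2 (by rw [← hQP, h0, map_zero])
  exact Module.End.hasEigenvalue_of_hasEigenvector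
    ⟨Module.End.mem_eigenspace_iff.mpr (by rw [LinearMap.comp_apply, hQP, map_smul]), hPv⟩

variable [IsAlgClosed K]

theorem exists_ne_zero_hasEigenvalue_of_trace_ne_zero [FiniteDimensional K V] {T : Module.End K V}
    (hT : LinearMap.trace K V T ≠ 0) : ∃ μ ≠ 0, T.HasEigenvalue μ := by
  rw [Module.End.trace_eq_sum_roots_charpoly_of_splits (IsAlgClosed.splits _)] at hT
  obtain ⟨μ, hμ, hμ0⟩ : ∃ μ ∈ T.charpoly.roots, μ ≠ 0 := by
    contrapose! hT
    exact Multiset.sum_eq_zero hT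
  exact ⟨μ, hμ0, T.hasEigenvalue_iff_isRoot_charpoly μ |>.mpr (Polynomial.isRoot_of_mem_roots hμ)⟩

theorem exists_ne_zero_hasEigenvalue_sum_smulRight {ι : Type*} [Fintype ι]
    {φ : ι → Module.Dual K V} {v : ι → V} (h : ∑ i, φ i (v i) ≠ 0) :
    ∃ μ ≠ 0, Module.End.HasEigenvalue (∑ i, (φ i).smulRight (v i)) μ := by
  classical
  let P : (ι → K) →ₗ[K] V := Fintype.linearCombination K v
  let Q : V →ₗ[K] ι → K := LinearMap.pi φ
  have hPQ : P ∘ₗ Q = ∑ i, (φ i).smulRight (v i) := by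
    ext x
    simp [P, Q, Fintype.linearCombination_apply]
  have hQP : Q ∘ₗ P = ∑ i, (LinearMap.proj i).smulRight (Q (v i)) := by
    ext i j
    simp [P, Q, Fintype.linearCombination_apply, Pi.single_apply, ite_apply]
  have htrace : LinearMap.trace K (ι → K) (Q ∘ₗ P) = ∑ i, φ i (v i) := by
    simp [hQP, Q]
  obtain ⟨μ, hμ0, hμ⟩ := exists_ne_zero_hasEigenvalue_of_trace_ne_zero (htrace ▸ h)
  exact ⟨μ, hμ0, hPQ ▸ hasEigenvalue_comp_comm hμ0 hμ⟩

end LinearAlgebra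

section SpectralRadius

theorem spectralRadius_units_conjugate' {𝕜 A : Type*} [NormedField 𝕜] [Ring A] [Algebra 𝕜 A] (x : A)
    (u : Aˣ) : spectralRadius 𝕜 (↑u⁻¹ * x * u) = spectralRadius 𝕜 x := by
  rw [spectralRadius, spectrum.units_conjugate', spectralRadius]

theorem spectralRadius_ne_top {𝕜 A : Type*} [NontriviallyNormedField 𝕜] [NormedRing A]
    [NormedAlgebra 𝕜 A] [CompleteSpace A] (x : A) : spectralRadius 𝕜 x ≠ ∞ := by
  refine ne_top_of_le_ne_top (ENNReal.coe_ne_top (r := ‖x‖₊ * ‖(1 : A)‖₊)) (iSup₂_le fun k hk ↦ ?_)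
  exact mod_cast spectrum.norm_le_norm_mul_of_mem hk

theorem nnnorm_le_spectralRadius_of_smul_eq_smul {𝕜 A X : Type*} [NormedField 𝕜] [Ring A]
    [Algebra 𝕜 A] [AddCommGroup X] [Module A X] [Module 𝕜 X] [IsScalarTower 𝕜 A X] {a : A}
    {μ : 𝕜} {e : X} (he : e ≠ 0) (h : a • e = μ • e) : (‖μ‖₊ : ℝ≥0∞) ≤ spectralRadius 𝕜 a := by
  have heigen : Module.End.HasEigenvalue (Algebra.lsmul 𝕜 𝕜 X a) μ :=
    Module.End.hasEigenvalue_of_hasEigenvector ⟨Module.End.mem_eigenspace_iff.mpr h, he⟩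
  exact le_iSup₂ (f := fun (k : 𝕜) (_ : k ∈ spectrum 𝕜 a) ↦ (‖k‖₊ : ℝ≥0∞)) μ
    (AlgHom.spectrum_apply_subset _ a heigen.mem_spectrum)

end SpectralRadius

section Density

/-- `A` acts densely on the `k`-vector space `X`, in the sense of Jacobson: on finitely many vectors
every `k`-linear endomorphism agrees with the action of an element of `A`. -/
def ActsDensely (k A X : Type*) [Semiring k] [AddCommMonoid X] [Module k X] [SMul A X] : Prop :=
  ∀ (f : Module.End k X) (s : Finset X), ∃ r : A, ∀ v ∈ s, r • v = f v

theorem ActsDensely.of_surjective_algebraMap_end {k A X : Type*} [CommSemiring k] [Ring A]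
    [Algebra k A] [AddCommGroup X] [Module A X] [Module k X] [IsScalarTower k A X]
    [IsSemisimpleModule A X]
    (h : Function.Surjective (algebraMap k (Module.End A X))) : ActsDensely k A X := by
  intro f s
  let F : Module.End (Module.End A X) X :=
    { toFun := f
      map_add' := f.map_add
      map_smul' := fun d v ↦ by
        obtain ⟨c, rfl⟩ := h d
        simp }
  obtain ⟨r, hr⟩ := jacobson_density F s
  exact ⟨r, fun v hv ↦ (hr v hv).symm⟩

theorem ActsDensely.exists_smul_eq_smul {k A X : Type*} [CommSemiring k] [AddCommMonoid X]
    [Module k X] [SMul A X] (h : ActsDensely k A X) (f : Module.Dual k X) (ξ : X) (s : Finset X) :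
    ∃ x : A, ∀ v ∈ s, x • v = f v • ξ :=
  h (f.smulRight ξ) s

end Density

section Contraction

theorem pow_smul_sub_mem {M k X : Type*} [Monoid M] [Semiring k] [AddCommGroup X] [Module k X]
    [DistribMulAction M X] {N : Submodule k X} {u : M} {v : X} (hN : ∀ w ∈ N, u • w ∈ N)
    (hv : u • v - v ∈ N) (m : ℕ) : u ^ m • v - v ∈ N := by
  induction m with
  | zero => simp
  | succ m ih =>
    have hsplit : u ^ (m + 1) • v - v = u • (u ^ m • v - v) + (u • v - v) := by
      rw [pow_succ', mul_smul, smul_sub]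
      abel
    exact hsplit ▸ N.add_mem (hN _ ih) hv

theorem pow_smul_eq_pow_smul_s8 {M k X : Type*} [Monoid M] [Monoid k] [MulAction M X]
    [MulAction k X] [SMulCommClass M k X] {u : M} {τ : k} {ξ : X} (h : u • ξ = τ • ξ) (m : ℕ) :
    u ^ m • ξ = τ ^ m • ξ := by
  induction m with
  | zero => simp
  | succ m ih => rw [pow_succ, mul_smul, h, smul_comm, ih, smul_smul, pow_succ']

variable {𝕜 A X : Type*} [RCLike 𝕜] [NormedRing A] [NormedAlgebra 𝕜 A] [HasSummableGeomSeries A]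
  [AddCommGroup X] [Module A X] [Module 𝕜 X] [IsScalarTower 𝕜 A X]

theorem ActsDensely.exists_unit_smul_eq_smul_norm_lt_one (h : ActsDensely 𝕜 A X) {ξ : X}
    (hξ : ξ ≠ 0) (s : Finset X) :
    ∃ (u : Aˣ) (τ : 𝕜), τ ≠ 0 ∧ ‖τ‖ < 1 ∧ u • ξ = τ • ξ ∧ ∀ v ∈ s, u • v - v ∈ 𝕜 ∙ ξ := by
  classical
  obtain ⟨g, hg⟩ := Module.Projective.exists_dual_eq_one 𝕜 hξ
  obtain ⟨y, hy⟩ := h.exists_smul_eq_smul g ξ (insert ξ s)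
  obtain ⟨c, hc0, hc1, hcy⟩ : ∃ c : ℝ, 0 < c ∧ c < 1 ∧ c * ‖y‖ < 1 := by
    have hpos : 0 < ‖y‖ + 2 := by positivity
    refine ⟨(‖y‖ + 2)⁻¹, by positivity, inv_lt_one_of_one_lt₀ (by linarith [norm_nonneg y]), ?_⟩
    rw [inv_mul_lt_one₀ hpos]
    linarith
  have hnorm : ‖(c : 𝕜) • y‖ < 1 := by rwa [norm_smul, RCLike.norm_of_nonneg hc0.le]
  have hu : ∀ v ∈ insert ξ s, Units.oneSub _ hnorm • v = v - (c * g v : 𝕜) • ξ := fun v hv ↦ by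
    rw [Units.smul_def, Units.val_oneSub, sub_smul, one_smul, smul_assoc, hy v hv, smul_smul]
  have hτ : ‖((1 - c : ℝ) : 𝕜)‖ = 1 - c := RCLike.norm_of_nonneg (by linarith)
  refine ⟨Units.oneSub _ hnorm, (1 - c : ℝ), ?_, by linarith, ?_, fun v hv ↦ ?_⟩
  · rw [← norm_pos_iff, hτ]
    linarith
  · rw [hu ξ (Finset.mem_insert_self ξ s), hg]
    push_cast
    module
  · rw [hu v (Finset.mem_insert_of_mem hv), sub_sub_cancel_left]
    exact neg_mem (Submodule.smul_mem _ _ (Submodule.mem_span_singleton_self ξ))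

theorem ActsDensely.exists_unit_smul_eq_smul_norm_lt (h : ActsDensely 𝕜 A X) {ξ : X}
    (hξ : ξ ≠ 0) (s : Finset X) {ε : ℝ} (hε : 0 < ε) :
    ∃ (u : Aˣ) (τ : 𝕜), τ ≠ 0 ∧ ‖τ‖ < ε ∧ u • ξ = τ • ξ ∧ ∀ v ∈ s, u • v - v ∈ 𝕜 ∙ ξ := by
  obtain ⟨u, τ, hτ0, hτ1, huξ, hus⟩ := h.exists_unit_smul_eq_smul_norm_lt_one hξ s
  obtain ⟨m, hm⟩ := exists_pow_lt_of_lt_one hε hτ1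
  have hspan : ∀ w ∈ 𝕜 ∙ ξ, u • w ∈ 𝕜 ∙ ξ := fun w hw ↦ by
    obtain ⟨c, rfl⟩ := Submodule.mem_span_singleton.mp hw
    rw [smul_comm, huξ, smul_smul]
    exact Submodule.smul_mem _ _ (Submodule.mem_span_singleton_self ξ)
  exact ⟨u ^ m, τ ^ m, pow_ne_zero m hτ0, by rwa [norm_pow], pow_smul_eq_pow_smul_s8 huξ m,
    fun v hv ↦ pow_smul_sub_mem hspan (hus v hv) m⟩

theorem ActsDensely.exists_forall_exists_conj_smul_eq (h : ActsDensely 𝕜 A X) {ξ : X} (hξ : ξ ≠ 0)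
    {f : Module.Dual 𝕜 X} (hf : f ξ = 0) (s : Finset X) :
    ∃ x : A, ∀ R : ℝ, ∃ (u : Aˣ) (t : 𝕜), R < ‖t‖ ∧
      ∀ v ∈ s, (↑u⁻¹ * x * u) • v = (t * f v) • ξ := by
  classical
  obtain ⟨x, hx⟩ := h.exists_smul_eq_smul f ξ (insert ξ s)
  have hxξ : x • ξ = 0 := by rw [hx ξ (Finset.mem_insert_self ξ s), hf, zero_smul]
  refine ⟨x, fun R ↦ ?_⟩
  obtain ⟨u, τ, hτ0, hτ, huξ, hus⟩ :=
    h.exists_unit_smul_eq_smul_norm_lt hξ s (ε := (|R| + 1)⁻¹) (by positivity)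
  have huξ' : u⁻¹ • ξ = τ⁻¹ • ξ := by
    rw [inv_smul_eq_iff, smul_comm, huξ, inv_smul_smul₀ hτ0]
  refine ⟨u, τ⁻¹, ?_, fun v hv ↦ ?_⟩
  · rw [norm_inv]
    have := (lt_inv_comm₀ (norm_pos_iff.mpr hτ0) (by positivity)).mp hτ
    linarith [le_abs_self R]
  · obtain ⟨c, hc⟩ := Submodule.mem_span_singleton.mp (hus v hv)
    have hxu : x • u • v = f v • ξ := by
      rw [← sub_add_cancel (u • v) v, ← hc, smul_add, smul_comm, hxξ, smul_zero, zero_add,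
        hx v (Finset.mem_insert_of_mem hv)]
    calc (↑u⁻¹ * x * u) • v = u⁻¹ • x • u • v := by simp only [mul_smul, Units.smul_def]
      _ = (τ⁻¹ * f v) • ξ := by rw [hxu, smul_comm, huξ', smul_smul, mul_comm]

end Contraction

theorem ActsDensely.sum_mul_smul_mem_span_singleton {A X : Type*} [NormedRing A]
    [NormedAlgebra ℂ A] [HasSummableGeomSeries A] [AddCommGroup X] [Module A X] [Module ℂ X]
    [IsScalarTower ℂ A X] (h : ActsDensely ℂ A X)
    {ι : Type*} [Fintype ι] {a b : ι → A}
    (hS : ∀ x : A, ∃ M : ℝ≥0, ∀ u : Aˣ,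
      spectralRadius ℂ (∑ i, a i * (↑u⁻¹ * x * u) * b i) ≤ M) (ξ : X) :
    (∑ i, b i * a i) • ξ ∈ ℂ ∙ ξ := by
  classical
  by_contra hw
  have hξ : ξ ≠ 0 := by
    rintro rfl
    simp at hw
  obtain ⟨f, hfw, hf⟩ := Submodule.exists_le_ker_of_notMem hw
  have hfξ : f ξ = 0 := hf (Submodule.mem_span_singleton_self ξ)
  obtain ⟨μ, hμ0, hμ⟩ := exists_ne_zero_hasEigenvalue_sum_smulRight
    (φ := fun i ↦ f ∘ₗ Algebra.lsmul ℂ ℂ X (b i)) (v := fun i ↦ a i • ξ)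
    (by simpa [Finset.sum_smul, mul_smul] using hfw)
  obtain ⟨e, he⟩ := hμ.exists_hasEigenvector
  have hTe : ∑ i, f (b i • e) • a i • ξ = μ • e := by simpa using he.apply_eq_smul
  obtain ⟨x, hx⟩ := h.exists_forall_exists_conj_smul_eq hξ hfξ (Finset.univ.image (b · • e))
  obtain ⟨M, hM⟩ := hS x
  obtain ⟨u, t, ht, hu⟩ := hx (M / ‖μ‖)
  have heigen : (∑ i, a i * (↑u⁻¹ * x * u) * b i) • e = (t * μ) • e := by
    calc (∑ i, a i * (↑u⁻¹ * x * u) * b i) • e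
        = ∑ i, a i • (↑u⁻¹ * x * u) • b i • e := by simp only [Finset.sum_smul, mul_smul]
      _ = ∑ i, t • f (b i • e) • a i • ξ := Finset.sum_congr rfl fun i hi ↦ by
          rw [hu _ (Finset.mem_image_of_mem _ hi), smul_comm, mul_smul]
      _ = (t * μ) • e := by rw [← Finset.smul_sum, hTe, smul_smul]
  have hle : ‖t * μ‖ ≤ M := mod_cast
    (nnnorm_le_spectralRadius_of_smul_eq_smul he.2 heigen).trans (hM u)
  rw [norm_mul, ← le_div_iff₀ (norm_pos_iff.mpr hμ0)] at hle
  exact hle.not_gt ht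

section BanachModule

variable {A X : Type*} [NormedRing A] [NormedAlgebra ℂ A] [CompleteSpace A]
  [NormedAddCommGroup X] [NormedSpace ℂ X] [CompleteSpace X] [Module A X] [IsScalarTower ℂ A X]
  [ContinuousSMul A X] [IsSimpleModule A X]

theorem continuous_end_of_isSimpleModule (d : Module.End A X) : Continuous d := by
  have := IsSimpleModule.nontrivial A X
  obtain ⟨ξ, hξ⟩ := exists_ne (0 : X)
  let π : A →L[ℂ] X :=
    ⟨(LinearMap.toSpanSingleton A X ξ).restrictScalars ℂ, continuous_id.smul continuous_const⟩
  have hπ : Function.Surjective π := IsSimpleModule.toSpanSingleton_surjective A hξ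
  rw [(π.isQuotientMap hπ).continuous_iff]
  have hcomp : d ∘ π = fun a ↦ a • d ξ := funext fun a ↦ d.map_smul a ξ
  exact hcomp ▸ continuous_id.smul continuous_const

theorem surjective_algebraMap_end_of_isSimpleModule :
    Function.Surjective (algebraMap ℂ (Module.End A X)) := by
  classical
  have := IsSimpleModule.nontrivial A X
  let Φ : Module.End A X →ₐ[ℂ] X →L[ℂ] X :=
    AlgHom.ofLinearMap
      { toFun := fun d ↦ ⟨d.restrictScalars ℂ, continuous_end_of_isSimpleModule d⟩
        map_add' := fun _ _ ↦ rfl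
        map_smul' := fun _ _ ↦ rfl }
      rfl fun _ _ ↦ rfl
  intro d
  -- As in Gelfand–Mazur, but the division ring `End_A X` carries no norm: the nonempty spectrum is
  -- that of `d` as a bounded operator.
  obtain ⟨c, hc⟩ := spectrum.nonempty (Φ d)
  have hc' : ¬ IsUnit (algebraMap ℂ _ c - d) := AlgHom.spectrum_apply_subset Φ d hc
  rw [isUnit_iff_ne_zero, not_not] at hc'
  exact ⟨c, sub_eq_zero.mp hc'⟩

end BanachModule

theorem mem_centerModRadical_of_forall_isMaximal {A : Type*} [Ring A] {w : A}
    (h : ∀ L : Ideal A, L.IsMaximal → ∀ (c : A) (v : A ⧸ L), w • c • v = c • w • v) :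
    w ∈ centerModRadical A := by
  intro c
  refine Submodule.mem_sInf.mpr fun L ⟨_, hL⟩ ↦ ?_
  rw [← Submodule.Quotient.mk_eq_zero L, Submodule.Quotient.mk_sub, sub_eq_zero]
  simpa [← Submodule.Quotient.mk_smul] using h L hL c (Submodule.Quotient.mk 1)

theorem spectrally_bounded_elementary_operator_sum_mem_centerModRadical_general
    {A : Type*} [NormedRing A] [NormedAlgebra ℂ A] [CompleteSpace A]
    {ι : Type*} [Fintype ι] (a b : ι → A)
    (hS : ∀ x : A, ∃ M : ℝ≥0, ∀ u : Aˣ,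
      spectralRadius ℂ (∑ i, a i * (↑u⁻¹ * x * u) * b i) ≤ M) :
    (∑ i, b i * a i) ∈ centerModRadical A := by
  refine mem_centerModRadical_of_forall_isMaximal fun L hL c v ↦ ?_
  have : IsSimpleModule A (A ⧸ L) := isSimpleModule_iff_isCoatom.mpr hL.out
  have hdense : ActsDensely ℂ A (A ⧸ L) :=
    .of_surjective_algebraMap_end surjective_algebraMap_end_of_isSimpleModule
  obtain ⟨l, hl⟩ := exists_forall_eq_smul_of_forall_mem_span_singleton
    (T := Algebra.lsmul ℂ ℂ (A ⧸ L) (∑ i, b i * a i))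
    (hdense.sum_mul_smul_mem_span_singleton hS)
  simp only [Algebra.lsmul_coe] at hl
  rw [hl, hl, smul_comm]

/-- **Proposition 3.2.** Let `A` be a unital complex Banach algebra and let
`S = Σ_{i=1}^n M_{a_i,b_i}` be a spectrally bounded elementary operator on `A`.
Then `Σ_{i=1}^n b_i a_i` belongs to `𝒵(A)`, the centre modulo the radical. -/
theorem spectrally_bounded_elementary_operator_sum_mem_centerModRadical
    {A : Type*} [NormedRing A] [NormedAlgebra ℂ A] [CompleteSpace A]
    {n : ℕ} (a b : Fin n → A)
    (hS : SpectrallyBounded (fun x : A => ∑ i, a i * x * b i)) :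
    (∑ i, b i * a i) ∈ centerModRadical A := by
  obtain ⟨M, hM⟩ := hS
  refine spectrally_bounded_elementary_operator_sum_mem_centerModRadical_general a b fun x ↦
    ⟨M * (spectralRadius ℂ x).toNNReal, fun u ↦ (hM _).trans_eq ?_⟩
  rw [spectralRadius_units_conjugate', ENNReal.coe_mul,
    ENNReal.coe_toNNReal (spectralRadius_ne_top x)]
end
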